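/- arXiv:1605.03727 — 2 statements merged into one kernel-verified Lean document; each statement's English description precedes it below -/
import Mathlib

section
/- A p-form F at a point of an n-dimensional Lorentzian spacetime is VSI₀, i.e., all zeroth-order scalar polynomial invariants constructed from F alone vanish, if and only if F is of type N. -/
open scoped BigOperators

noncomputable section

namespace VSI

/-! ### Basic setup: tensor fields on an `n`-dimensional coordinate chart -/

/-- A point of an `n`-dimensional coordinate chart. -/
abbrev Pt (n : ℕ) := Fin n → ℝ

/-- A covariant tensor field of rank `k`, given by its components. -/
abbrev TensorField (n k : ℕ) := Pt n → (Fin k → Fin n) → ℝ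

/-- A vector field, given by its components. -/
abbrev VecField (n : ℕ) := Pt n → Fin n → ℝ

/-- A field of `n × n` matrices (e.g. a metric). -/
abbrev MetricField (n : ℕ) := Pt n → Matrix (Fin n) (Fin n) ℝ

/-- Partial derivative of a scalar function along the `a`-th coordinate. -/
def pd {n : ℕ} (f : Pt n → ℝ) (a : Fin n) (x : Pt n) : ℝ :=
  fderiv ℝ f x (Pi.single a 1)

/-- Partial derivative masked to the transverse directions (coordinates `≥ 2`). -/
def pdT {n : ℕ} (f : Pt n → ℝ) (a : Fin n) (x : Pt n) : ℝ :=
  if 2 ≤ (a : ℕ) then pd f a x else 0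

/-- A function on the chart is independent of the coordinate `r` (coordinate number 1). -/
def IndepOfR {n : ℕ} {α : Type*} (f : Pt n → α) : Prop :=
  ∀ x x' : Pt n, (∀ i : Fin n, (i : ℕ) ≠ 1 → x i = x' i) → f x = f x'

/-- A smooth symmetric metric of Lorentzian signature `(-,+,…,+)`. -/
def IsLorentzMetric {n : ℕ} (g : MetricField n) : Prop :=
  (∀ a b, ContDiff ℝ (⊤ : ℕ∞) fun x => g x a b) ∧ (∀ x, (g x).IsSymm) ∧
  (∀ x, ∃ P : Matrix (Fin n) (Fin n) ℝ, IsUnit P.det ∧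
    P.transpose * g x * P = Matrix.diagonal fun i : Fin n => if (i : ℕ) = 0 then (-1 : ℝ) else 1)

/-- Metric pairing of two vectors at a point. -/
def gdot {n : ℕ} (g : MetricField n) (x : Pt n) (X Y : Fin n → ℝ) : ℝ :=
  ∑ a, ∑ b, g x a b * X a * Y b

/-- Index lowering of a vector field. -/
def lower {n : ℕ} (g : MetricField n) (ℓ : VecField n) (x : Pt n) (a : Fin n) : ℝ :=
  ∑ b, g x a b * ℓ x b

/-- The 1-form (rank-1 covariant tensor field) associated with a vector field. -/
def lowerField {n : ℕ} (g : MetricField n) (ℓ : VecField n) : TensorField n 1 :=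
  fun x idx => lower g ℓ x (idx 0)

/-- Christoffel symbols `Γ^a_{bc}` of the Levi-Civita connection of `g`. -/
def christoffel {n : ℕ} (g : MetricField n) (x : Pt n) (a b c : Fin n) : ℝ :=
  (1/2) * ∑ d, (g x)⁻¹ a d *
    (pd (fun y => g y d c) b x + pd (fun y => g y b d) c x - pd (fun y => g y b c) d x)

/-- Covariant derivative of a covariant tensor field; the new (derivative) index is
the first index of the result. -/
def covD {n k : ℕ} (g : MetricField n) (T : TensorField n k) : TensorField n (k+1) :=
  fun x idx =>
    pd (fun y => T y fun m => idx m.succ) (idx 0) x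
    - ∑ m : Fin k, ∑ e : Fin n,
        christoffel g x e (idx 0) (idx m.succ) * T x (Function.update (fun m' => idx m'.succ) m e)

/-- Iterated covariant derivative. -/
def covDIter {n k : ℕ} (g : MetricField n) (T : TensorField n k) : (I : ℕ) → TensorField n (k + I)
  | 0 => T
  | I + 1 => covD g (covDIter g T I)

/-! ### Scalar polynomial invariants and tensor concomitants -/

/-- A scheme describing a polynomial concomitant of a rank-`k` tensor field: a full
metric contraction of a tensor product of covariant derivatives (of orders `ord j`)
of the field, with `r` free indices left over.  `m` is the number of contracted
index pairs; `slots` enumerates all index slots of the tensor product. -/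
structure ConcomScheme (k r : ℕ) where
  N : ℕ
  hN : 0 < N
  ord : Fin N → ℕ
  m : ℕ
  slots : ((Fin m × Bool) ⊕ Fin r) ≃ (Σ j : Fin N, Fin (k + ord j))

/-- The value of a concomitant scheme: all contracted index pairs are contracted with
the inverse metric. -/
def ConcomScheme.value {k r : ℕ} (S : ConcomScheme k r) {n : ℕ} (g : MetricField n)
    (T : TensorField n k) : TensorField n r := fun x free =>
  ∑ φ : Fin S.m × Bool → Fin n,
    (∏ i : Fin S.m, (g x)⁻¹ (φ (i, false)) (φ (i, true))) *
    ∏ j : Fin S.N, covDIter g T (S.ord j) x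
      (fun s => Sum.elim φ free (S.slots.symm ⟨j, s⟩))

/-- All scalar polynomial invariants constructed from `T` and its covariant
derivatives up to order `I` vanish. -/
def IsVSIUpTo {n k : ℕ} (g : MetricField n) (T : TensorField n k) (I : ℕ) : Prop :=
  ∀ S : ConcomScheme k 0, (∀ j, S.ord j ≤ I) → ∀ x v, S.value g T x v = 0

/-- All scalar polynomial invariants of arbitrary order vanish. -/
def IsVSI {n k : ℕ} (g : MetricField n) (T : TensorField n k) : Prop :=
  ∀ I : ℕ, IsVSIUpTo g T I

/-- All zeroth order scalar polynomial invariants of `T` vanish at the point `x`. -/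
def IsVSI0At {n k : ℕ} (g : MetricField n) (T : TensorField n k) (x : Pt n) : Prop :=
  ∀ S : ConcomScheme k 0, (∀ j, S.ord j = 0) → ∀ v, S.value g T x v = 0

/-- A rank-`r` tensor field `G` is (polynomially) constructed from `T`, its covariant
derivatives of arbitrary order and the metric. -/
def IsConstructedFrom {n k r : ℕ} (g : MetricField n) (T : TensorField n k)
    (G : TensorField n r) : Prop :=
  G ∈ Submodule.span ℝ {G' : TensorField n r | ∃ S : ConcomScheme k r, G' = S.value g T}

/-- A symmetric-2-tensor "correction" to the standard electromagnetic energy-momentum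
tensor: constructed from `T` and its covariant derivatives, where each monomial either
contains at least three factors of the field or at least one covariant derivative
(i.e. it comes from a non-Maxwellian term of a generalized electrodynamics). -/
def IsCorrectionTensor {n k : ℕ} (g : MetricField n) (T : TensorField n k)
    (Tc : TensorField n 2) : Prop :=
  Tc ∈ Submodule.span ℝ {G : TensorField n 2 |
    ∃ S : ConcomScheme k 2, (3 ≤ S.N ∨ ∃ j, 1 ≤ S.ord j) ∧ G = S.value g T}

/-! ### p-forms, type N, Lie derivative -/

def IsAlternating {n k : ℕ} (T : TensorField n k) : Prop :=
  ∀ (x : Pt n) (idx : Fin k → Fin n) (σ : Equiv.Perm (Fin k)),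
    T x (idx ∘ σ) = ((Equiv.Perm.sign σ : ℤ) : ℝ) * T x idx

def IsSmoothT {n k : ℕ} (T : TensorField n k) : Prop :=
  ∀ idx, ContDiff ℝ (⊤ : ℕ∞) fun x => T x idx

/-- A smooth differential form (totally antisymmetric covariant tensor field). -/
def IsFormField {n k : ℕ} (T : TensorField n k) : Prop :=
  IsSmoothT T ∧ IsAlternating T

def IsSmoothVec {n : ℕ} (ℓ : VecField n) : Prop :=
  ∀ a, ContDiff ℝ (⊤ : ℕ∞) fun x => ℓ x a

/-- A (nowhere vanishing, smooth) null vector field. -/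
def IsNullField {n : ℕ} (g : MetricField n) (ℓ : VecField n) : Prop :=
  IsSmoothVec ℓ ∧ (∀ x, ℓ x ≠ 0) ∧ ∀ x, gdot g x (ℓ x) (ℓ x) = 0

/-- `ℓ^a F_{a b₁ … b_{p-1}} = 0`. -/
def ContractsFirstZero {n p : ℕ} [NeZero p] (ℓ : VecField n) (F : TensorField n p) : Prop :=
  ∀ (x : Pt n) (v : Fin p → Fin n), (∑ a, ℓ x a * F x (Function.update v 0 a)) = 0

/-- `ℓ_{[a} F_{b₁ … b_p]} = 0`. -/
def WedgeWithZero {n p : ℕ} (g : MetricField n) (ℓ : VecField n) (F : TensorField n p) : Prop :=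
  ∀ (x : Pt n) (idx : Fin (p+1) → Fin n),
    (∑ σ : Equiv.Perm (Fin (p+1)), ((Equiv.Perm.sign σ : ℤ) : ℝ) *
      (lower g ℓ x (idx (σ 0)) * F x (fun m => idx (σ m.succ)))) = 0

/-- The `p`-form `F` is of type N with multiple null direction `ℓ`. -/
def IsTypeN {n p : ℕ} [NeZero p] (g : MetricField n) (F : TensorField n p)
    (ℓ : VecField n) : Prop :=
  IsNullField g ℓ ∧ ContractsFirstZero ℓ F ∧ WedgeWithZero g ℓ F

/-- Lie derivative of a covariant tensor field along a vector field. -/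
def lieD {n k : ℕ} (ℓ : VecField n) (T : TensorField n k) : TensorField n k :=
  fun x idx =>
    (∑ a, ℓ x a * pd (fun y => T y idx) a x)
    + ∑ m : Fin k, ∑ a, pd (fun y => ℓ y a) (idx m) x * T x (Function.update idx m a)

/-! ### Optical properties: geodesic, Kundt -/

/-- `∇_b ℓ_a` (first index is the derivative index). -/
def nablaLow {n : ℕ} (g : MetricField n) (ℓ : VecField n) (x : Pt n) (b a : Fin n) : ℝ :=
  covD g (lowerField g ℓ) x ![b, a]

/-- `ℓ` is geodesic: `ℓ^b ∇_b ℓ_a ∝ ℓ_a`. -/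
def IsGeodesicField {n : ℕ} (g : MetricField n) (ℓ : VecField n) : Prop :=
  ∀ x, ∃ c : ℝ, ∀ a, (∑ b, ℓ x b * nablaLow g ℓ x b a) = c * lower g ℓ x a

/-- `ℓ` is affinely parameterized: `ℓ^b ∇_b ℓ_a = 0`. -/
def IsAffinelyParam {n : ℕ} (g : MetricField n) (ℓ : VecField n) : Prop :=
  ∀ x a, (∑ b, ℓ x b * nablaLow g ℓ x b a) = 0

/-- `ℓ` is a Kundt null vector field: null, geodesic and with vanishing optical matrix
(expansion-free, shear-free and twist-free). -/
def IsKundt {n : ℕ} (g : MetricField n) (ℓ : VecField n) : Prop :=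
  IsNullField g ℓ ∧ IsGeodesicField g ℓ ∧
  ∀ (x : Pt n) (X Y : Fin n → ℝ), gdot g x X (ℓ x) = 0 → gdot g x Y (ℓ x) = 0 →
    (∑ a, ∑ b, X a * Y b * nablaLow g ℓ x b a) = 0

/-! ### Curvature -/

/-- Fully lowered Riemann tensor `R_{abcd}`. -/
def riemann {n : ℕ} (g : MetricField n) : TensorField n 4 := fun x idx =>
  ∑ e, g x (idx 0) e *
    (pd (fun y => christoffel g y e (idx 3) (idx 1)) (idx 2) x
     - pd (fun y => christoffel g y e (idx 2) (idx 1)) (idx 3) x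
     + ∑ f', (christoffel g x e (idx 2) f' * christoffel g x f' (idx 3) (idx 1)
            - christoffel g x e (idx 3) f' * christoffel g x f' (idx 2) (idx 1)))

def ricci {n : ℕ} (g : MetricField n) (x : Pt n) (b d : Fin n) : ℝ :=
  ∑ a, ∑ c, (g x)⁻¹ a c * riemann g x ![a, b, c, d]

def ricciScalar {n : ℕ} (g : MetricField n) (x : Pt n) : ℝ :=
  ∑ b, ∑ d, (g x)⁻¹ b d * ricci g x b d

def tracelessRicci {n : ℕ} (g : MetricField n) : TensorField n 2 := fun x idx =>
  ricci g x (idx 0) (idx 1) - ricciScalar g x / (n : ℝ) * g x (idx 0) (idx 1)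

/-- Weyl tensor `C_{abcd}` (for `n ≥ 3`). -/
def weyl {n : ℕ} (g : MetricField n) : TensorField n 4 := fun x idx =>
  riemann g x idx
  - (1 / ((n : ℝ) - 2)) *
      (g x (idx 0) (idx 2) * ricci g x (idx 3) (idx 1)
       - g x (idx 0) (idx 3) * ricci g x (idx 2) (idx 1)
       - g x (idx 1) (idx 2) * ricci g x (idx 3) (idx 0)
       + g x (idx 1) (idx 3) * ricci g x (idx 2) (idx 0))
  + (1 / (((n : ℝ) - 1) * ((n : ℝ) - 2))) * ricciScalar g x *
      (g x (idx 0) (idx 2) * g x (idx 3) (idx 1) - g x (idx 0) (idx 3) * g x (idx 2) (idx 1))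

/-! ### Null frames, boost weights, algebraic types -/

/-- A null frame at a point: two null vectors `e 0 = ℓ`, `e 1 = n` with `ℓ·n = 1`, and
orthonormal spacelike vectors `e i`, `i ≥ 2`, orthogonal to both. -/
structure NullFrameAt {n : ℕ} [NeZero n] (g : MetricField n) (x : Pt n) where
  e : Fin n → Fin n → ℝ
  h00 : gdot g x (e 0) (e 0) = 0
  h11 : gdot g x (e 1) (e 1) = 0
  h01 : gdot g x (e 0) (e 1) = 1
  h0i : ∀ i : Fin n, 2 ≤ (i : ℕ) → gdot g x (e 0) (e i) = 0
  h1i : ∀ i : Fin n, 2 ≤ (i : ℕ) → gdot g x (e 1) (e i) = 0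
  hij : ∀ i j : Fin n, 2 ≤ (i : ℕ) → 2 ≤ (j : ℕ) →
    gdot g x (e i) (e j) = (if i = j then 1 else 0)

/-- Boost weight of a frame multi-index: `+1` for each contraction with `ℓ = e 0`,
`-1` for each contraction with `n = e 1`. -/
def bw {n k : ℕ} (a : Fin k → Fin n) : ℤ :=
  ((Finset.univ.filter fun m => (a m : ℕ) = 0).card : ℤ)
  - ((Finset.univ.filter fun m => (a m : ℕ) = 1).card : ℤ)

/-- Frame components of a covariant tensor. -/
def frameComp {n k : ℕ} (T : TensorField n k) (e : Fin n → Fin n → ℝ) (x : Pt n)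
    (a : Fin k → Fin n) : ℝ :=
  ∑ idx : Fin k → Fin n, T x idx * ∏ m, e (a m) (idx m)

/-- The tensor field `T` has boost order at most `b` with respect to the null
direction `ℓ`: in any null frame containing `ℓ`, all frame components of boost
weight `> b` vanish.  `b = 0` is the aligned type II condition, `b = -1` type III. -/
def BoostOrderLE {n k : ℕ} [NeZero n] (g : MetricField n) (ℓ : VecField n)
    (T : TensorField n k) (b : ℤ) : Prop :=
  ∀ (x : Pt n) (fr : NullFrameAt g x), fr.e 0 = ℓ x →
    ∀ a : Fin k → Fin n, b < bw a → frameComp T fr.e x a = 0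

/-- `g` is a degenerate Kundt metric with Kundt null direction `ℓ`: `ℓ` is Kundt and
the Riemann tensor together with its covariant derivatives of all orders is of aligned
type II with respect to `ℓ`. -/
def IsDegenerateKundt {n : ℕ} [NeZero n] (g : MetricField n) (ℓ : VecField n) : Prop :=
  IsKundt g ℓ ∧ ∀ I : ℕ, BoostOrderLE g ℓ (covDIter g (riemann g) I) 0

/-! ### Exterior derivative, Hodge dual, Maxwell equations -/

/-- Exterior derivative (components, no normalization factor). -/
def extD {n k : ℕ} (F : TensorField n k) : TensorField n (k+1) := fun x idx =>
  ∑ m : Fin (k+1), (-1 : ℝ) ^ (m : ℕ) *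
    pd (fun y => F y fun i => idx (m.succAbove i)) (idx m) x

/-- Sign of a self-map of `Fin k` (0 if not bijective). -/
def permSign {k : ℕ} (f : Fin k → Fin k) : ℤ :=
  if h : Function.Bijective f then Equiv.Perm.sign (Equiv.ofBijective f h) else 0

/-- Raise all indices of a covariant tensor with the inverse metric. -/
def raiseAll {n k : ℕ} (g : MetricField n) (T : TensorField n k) : TensorField n k :=
  fun x idx => ∑ jdx : Fin k → Fin n, (∏ m, (g x)⁻¹ (idx m) (jdx m)) * T x jdx

/-- Hodge dual of a `p`-form (`p + q = n`), via the metric volume element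
`√|det g| ε_{a₁…aₙ}`. -/
def hodge {n p q : ℕ} (h : p + q = n) (g : MetricField n) (F : TensorField n p) :
    TensorField n q := fun x idx =>
  (1 / (Nat.factorial p : ℝ)) *
    ∑ a : Fin p → Fin n, raiseAll g F x a *
      (Real.sqrt |(g x).det| *
        ((permSign fun i => Fin.append a idx (Fin.cast h.symm i) : ℤ) : ℝ))

/-- Source-free Maxwell equations `dF = 0 = d*F` for a `p`-form (`p + q = n`). -/
def MaxwellEqs {n p q : ℕ} (h : p + q = n) (g : MetricField n) (F : TensorField n p) : Prop :=
  (∀ x idx, extD F x idx = 0) ∧ (∀ x idx, extD (hodge h g F) x idx = 0)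

/-! ### Wedge products -/

def wedgeP {n a b : ℕ} (F : TensorField n a) (G : TensorField n b) : TensorField n (a+b) :=
  fun x idx => ∑ σ : Equiv.Perm (Fin (a+b)), ((Equiv.Perm.sign σ : ℤ) : ℝ) *
    (F x fun i => idx (σ (Fin.castAdd b i))) * (G x fun j => idx (σ (Fin.natAdd a j)))

def wedgePow {n p : ℕ} (F : TensorField n p) : (k : ℕ) → TensorField n (p * k)
  | 0 => fun _ _ => 1
  | k + 1 => wedgeP (wedgePow F k) F

def castT {n a b : ℕ} (h : a = b) (T : TensorField n a) : TensorField n b :=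
  fun x idx => T x fun i => idx (Fin.cast h i)

/-! ### Degenerate Kundt metrics in adapted coordinates -/

/-- The Kundt metric `ds² = 2 du (dr + H du + W_α dx^α) + g_{αβ} dx^α dx^β` in
coordinates `(u, r, x^α) = (x⁰, x¹, x^{α≥2})`. -/
def kundtMetric {n : ℕ} (H : Pt n → ℝ) (W : Pt n → Fin n → ℝ) (hT : MetricField n) :
    MetricField n := fun x => Matrix.of fun a b =>
  if (a : ℕ) = 0 ∧ (b : ℕ) = 0 then 2 * H x
  else if ((a : ℕ) = 0 ∧ (b : ℕ) = 1) ∨ ((a : ℕ) = 1 ∧ (b : ℕ) = 0) then 1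
  else if (a : ℕ) = 0 then W x b
  else if (b : ℕ) = 0 then W x a
  else if (a : ℕ) = 1 ∨ (b : ℕ) = 1 then 0
  else hT x a b

/-- A transverse (Riemannian) metric `g_{αβ}(u,x)`, stored as an `n×n` matrix padded
by the identity on the coordinates `u, r`. -/
def IsTransverseMetric {n : ℕ} (hT : MetricField n) : Prop :=
  (∀ (x : Pt n) (a b : Fin n), ((a : ℕ) < 2 ∨ (b : ℕ) < 2) → hT x a b = (if a = b then 1 else 0)) ∧
  (∀ x, (hT x).IsSymm) ∧ (∀ a b, ContDiff ℝ (⊤ : ℕ∞) fun x => hT x a b) ∧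
  IndepOfR hT ∧ (∀ x, (hT x).PosDef)

/-- Data of a degenerate Kundt metric: `W_α = r W¹_α + W⁰_α`,
`H = r² H² + r H¹ + H⁰`, transverse metric `hT`. -/
structure DegKundtData (n : ℕ) where
  H2 : Pt n → ℝ
  H1 : Pt n → ℝ
  H0 : Pt n → ℝ
  W1 : Pt n → Fin n → ℝ
  W0 : Pt n → Fin n → ℝ
  hT : MetricField n

def DegKundtData.Hfun {n : ℕ} [NeZero n] (D : DegKundtData n) : Pt n → ℝ :=
  fun z => (z 1)^2 * D.H2 z + z 1 * D.H1 z + D.H0 z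

def DegKundtData.Wfun {n : ℕ} [NeZero n] (D : DegKundtData n) : Pt n → Fin n → ℝ :=
  fun z b => z 1 * D.W1 z b + D.W0 z b

/-- The degenerate Kundt metric built from the data. -/
def DegKundtData.metric {n : ℕ} [NeZero n] (D : DegKundtData n) : MetricField n :=
  kundtMetric D.Hfun D.Wfun D.hT

/-- Regularity and shape conditions on the degenerate Kundt data: the metric functions
depend only on `(u, x^α)` and are smooth, `W`'s are transverse. -/
def DegKundtData.Regular {n : ℕ} (D : DegKundtData n) : Prop :=
  IsTransverseMetric D.hT ∧
  IndepOfR D.H2 ∧ IndepOfR D.H1 ∧ IndepOfR D.H0 ∧ IndepOfR D.W1 ∧ IndepOfR D.W0 ∧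
  ContDiff ℝ (⊤ : ℕ∞) D.H2 ∧ ContDiff ℝ (⊤ : ℕ∞) D.H1 ∧ ContDiff ℝ (⊤ : ℕ∞) D.H0 ∧
  (∀ a, ContDiff ℝ (⊤ : ℕ∞) fun x => D.W1 x a) ∧ (∀ a, ContDiff ℝ (⊤ : ℕ∞) fun x => D.W0 x a) ∧
  (∀ (x : Pt n) (a : Fin n), (a : ℕ) < 2 → D.W1 x a = 0) ∧ (∀ (x : Pt n) (a : Fin n), (a : ℕ) < 2 → D.W0 x a = 0)

/-- The `(q+1)`-form `du ∧ f` built from a transverse `q`-form `f`. -/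
def duWedge {n q : ℕ} (f : TensorField n q) : TensorField n (q+1) := fun x idx =>
  ∑ m : Fin (q+1), (-1 : ℝ) ^ (m : ℕ) * (if (idx m : ℕ) = 0 then 1 else 0) *
    f x (fun i => idx (m.succAbove i))

/-- `f_{[α₂…α_p , α₁]} = 0`: `f` is closed in the transverse geometry. -/
def TransClosed {n q : ℕ} (f : TensorField n q) : Prop :=
  ∀ (x : Pt n) (v : Fin (q+1) → Fin n), (∀ i, 2 ≤ (v i : ℕ)) →
    (∑ m : Fin (q+1), (-1 : ℝ) ^ (m : ℕ) *
      pd (fun y => f y fun i => v (m.succAbove i)) (v m) x) = 0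

/-- `(√g̃ f^{β α₁…α_{p-2}})_{,β} = 0`: `f` is co-closed in the transverse geometry. -/
def TransCoclosed {n q : ℕ} [NeZero q] (hT : MetricField n) (f : TensorField n q) : Prop :=
  ∀ (x : Pt n) (v : Fin q → Fin n),
    (∑ b : Fin n, pd (fun y =>
      Real.sqrt (hT y).det * raiseAll hT f y (Function.update v 0 b)) b x) = 0

/-! ### Transverse curvature -/

def christoffelT {n : ℕ} (h : MetricField n) (x : Pt n) (a b c : Fin n) : ℝ :=
  (1/2) * ∑ d, (h x)⁻¹ a d *
    (pdT (fun y => h y d c) b x + pdT (fun y => h y b d) c x - pdT (fun y => h y b c) d x)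

def covDT {n k : ℕ} (h : MetricField n) (T : TensorField n k) : TensorField n (k+1) :=
  fun x idx =>
    pdT (fun y => T y fun m => idx m.succ) (idx 0) x
    - ∑ m : Fin k, ∑ e : Fin n,
        christoffelT h x e (idx 0) (idx m.succ) * T x (Function.update (fun m' => idx m'.succ) m e)

def riemannT {n : ℕ} (h : MetricField n) : TensorField n 4 := fun x idx =>
  ∑ e, h x (idx 0) e *
    (pdT (fun y => christoffelT h y e (idx 3) (idx 1)) (idx 2) x
     - pdT (fun y => christoffelT h y e (idx 2) (idx 1)) (idx 3) x
     + ∑ f', (christoffelT h x e (idx 2) f' * christoffelT h x f' (idx 3) (idx 1)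
            - christoffelT h x e (idx 3) f' * christoffelT h x f' (idx 2) (idx 1)))

def ricciT {n : ℕ} (h : MetricField n) (x : Pt n) (b d : Fin n) : ℝ :=
  ∑ a, ∑ c, (h x)⁻¹ a c * riemannT h x ![a, b, c, d]

def ricciScalarT {n : ℕ} (h : MetricField n) (x : Pt n) : ℝ :=
  ∑ b, ∑ d, (h x)⁻¹ b d * ricciT h x b d

/-- A covector field as a rank-1 tensor field. -/
def oneForm {n : ℕ} (W : Pt n → Fin n → ℝ) : TensorField n 1 := fun x idx => W x (idx 0)

/-- Transverse covariant derivative `∇̃_b V_a` (`= V_{a||b}`). -/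
def nablaT {n : ℕ} (h : MetricField n) (V : TensorField n 1) (x : Pt n) (b a : Fin n) : ℝ :=
  covDT h V x ![b, a]

/-- Second transverse covariant derivative `∇̃_c ∇̃_b V_a`. -/
def nablaT2 {n : ℕ} (h : MetricField n) (V : TensorField n 1) (x : Pt n) (c b a : Fin n) : ℝ :=
  covDT h (covDT h V) x ![c, b, a]

/-- Transverse divergence `V^{α}{}_{||α}`. -/
def divT {n : ℕ} (h : MetricField n) (V : TensorField n 1) (x : Pt n) : ℝ :=
  ∑ b, ∑ c, (h x)⁻¹ b c * nablaT h V x b c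

def gradT {n : ℕ} (f : Pt n → ℝ) : TensorField n 1 := fun x idx => pdT f (idx 0) x

/-- Transverse Laplacian. -/
def laplaceT {n : ℕ} (h : MetricField n) (f : Pt n → ℝ) (x : Pt n) : ℝ :=
  ∑ a, ∑ b, (h x)⁻¹ a b * covDT h (gradT f) x ![a, b]

def lnSqrtDet {n : ℕ} (h : MetricField n) (y : Pt n) : ℝ :=
  Real.log (Real.sqrt (h y).det)

/-! ### Electromagnetic energy-momentum tensor -/

/-- Standard energy-momentum tensor of a `(q+1)`-form Maxwell field:
`T_{ab} = (1/q!) (F_{a c⃗} F_b{}^{c⃗} - (1/(2(q+1))) g_{ab} F_{c⃗}F^{c⃗})`. -/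
def emTensor {n q : ℕ} (g : MetricField n) (F : TensorField n (q+1)) (x : Pt n)
    (a b : Fin n) : ℝ :=
  (1 / (Nat.factorial q : ℝ)) *
    ((∑ v : Fin q → Fin n, F x (Fin.cons a v) *
        ∑ w : Fin q → Fin n, (∏ i, (g x)⁻¹ (v i) (w i)) * F x (Fin.cons b w))
     - (1 / (2 * ((q : ℝ) + 1))) * g x a b *
        ∑ v : Fin (q+1) → Fin n, F x v * raiseAll g F x v)

/-! ### Coordinate transformations (for adapted coordinates) -/

/-- Jacobian `∂ψ^a/∂y^b` of a coordinate change. -/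
def jac {n : ℕ} (ψ : Pt n → Pt n) (y : Pt n) (a b : Fin n) : ℝ :=
  pd (fun z => ψ z a) b y

/-- Pullback of the metric along the coordinate change `ψ` (from new to old coords). -/
def pullMetric {n : ℕ} (g : MetricField n) (ψ : Pt n → Pt n) : MetricField n :=
  fun y => Matrix.of fun μ ν => ∑ a, ∑ b, jac ψ y a μ * jac ψ y b ν * g (ψ y) a b

/-- Pullback of a covariant tensor field along `ψ`. -/
def pullForm {n p : ℕ} (F : TensorField n p) (ψ : Pt n → Pt n) : TensorField n p :=
  fun y idx => ∑ jdx : Fin p → Fin n, (∏ m, jac ψ y (jdx m) (idx m)) * F (ψ y) jdx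

/-! ### Parallelly transported adapted frames -/

/-- A null frame field containing `ℓ`, parallelly transported along `ℓ` and adapted
(`M^i_{jk} = 0`). -/
structure AdaptedPTFrame {n : ℕ} [NeZero n] (g : MetricField n) (ℓ : VecField n) where
  fr : ∀ x : Pt n, NullFrameAt g x
  aligned : ∀ x, (fr x).e 0 = ℓ x
  parallel : ∀ (x : Pt n) (a c : Fin n),
    (∑ b, ℓ x b * (pd (fun y => (fr y).e a c) b x
      + ∑ d, christoffel g x c b d * (fr x).e a d)) = 0
  adapted : ∀ (x : Pt n) (i j k : Fin n), 2 ≤ (i : ℕ) → 2 ≤ (j : ℕ) → 2 ≤ (k : ℕ) →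
    (∑ a, ∑ b, covD g (lowerField g fun z => (fr z).e j) x ![b, a]
      * (fr x).e i a * (fr x).e k b) = 0

/-! ### Explicit Petrov type III solutions -/

/-- The type III vacuum metric of Petrov,
`ds² = 2 du (dr + ½(xr − x eˣ) du) + eˣ(dx² + e^{2u} dy²)`, in coordinates
`(u,r,x,y)`. -/
def petrovG : MetricField 4 := fun z => Matrix.of fun a b =>
  if a = 0 ∧ b = 0 then z 2 * z 1 - z 2 * Real.exp (z 2)
  else if (a = 0 ∧ b = 1) ∨ (a = 1 ∧ b = 0) then 1
  else if a = 2 ∧ b = 2 then Real.exp (z 2)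
  else if a = 3 ∧ b = 3 then Real.exp (z 2 + 2 * z 0)
  else 0

/-- The same metric with the electromagnetic backreaction term
`−2κ₀ eˣ c(u)²` included in `2H`. -/
def petrovEM (κ₀ : ℝ) (c : ℝ → ℝ) : MetricField 4 := fun z => Matrix.of fun a b =>
  if a = 0 ∧ b = 0 then z 2 * z 1 - z 2 * Real.exp (z 2) - 2 * κ₀ * Real.exp (z 2) * (c (z 0))^2
  else if (a = 0 ∧ b = 1) ∨ (a = 1 ∧ b = 0) then 1
  else if a = 2 ∧ b = 2 then Real.exp (z 2)
  else if a = 3 ∧ b = 3 then Real.exp (z 2 + 2 * z 0)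
  else 0

/-- The null direction `ℓ = ∂_r`. -/
def ellR : VecField 4 := fun _ a => if a = 1 then 1 else 0

/-- The transverse covector of the VSI Maxwell field (4). -/
def petrovA (c : ℝ → ℝ) (z : Pt 4) : Fin 4 → ℝ := fun a =>
  if a = 2 then -(Real.exp (z 2 / 2) * c (z 0) * Real.cos (z 3 * Real.exp (z 0) / 2))
  else if a = 3 then Real.exp (z 2 / 2) * c (z 0) * Real.exp (z 0) * Real.sin (z 3 * Real.exp (z 0) / 2)
  else 0

/-- The Maxwell 2-form
`F = e^{x/2} c(u) du ∧ (−cos(y eᵘ/2) dx + eᵘ sin(y eᵘ/2) dy)`. -/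
def petrovF (c : ℝ → ℝ) : TensorField 4 2 := fun z idx =>
  (if idx 0 = 0 then petrovA c z (idx 1) else 0)
  - (if idx 1 = 0 then petrovA c z (idx 0) else 0)

/-! Two invariants suffice: the square of `F` and the trace of `(W g⁻¹)²`, where `W` is the
symmetric tensor `F_{a c…} F_b^{c…}`.

In a null frame containing the null vector `ℓ`, the value `W ℓ ℓ` is a sum of squares, so `W` is
nonnegative on the null cone. Subtracting from `W` a nonnegative multiple of `ψ ⊗ ψ`, with `ψ` null,
makes the mixed time-space entries vanish in an orthonormal frame. The remainder commutes with the
Minkowski matrix and, once the trace of `(W g⁻¹)²` is zero, the sum of the squares of its entries is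
at most zero. Hence `W` is a multiple of `ψ ⊗ ψ` and annihilates a null vector `ℓ`.

In a null frame containing this `ℓ`, the equation `W ℓ = 0` says that a sum of squares of the
components of `ι_ℓ F` vanishes, so `ι_ℓ F = 0`. The square of `F` is then a sum of squares of the
components of `F` without null indices, and its vanishing gives `ℓ ∧ F = 0`.

Conversely, the components of a form of type N all have boost weight `-1`, and a complete
contraction only involves products of total boost weight `0`. -/

section TensorPower

open scoped Matrix

variable {R : Type*} [CommSemiring R] {ι κ κ' κ'' : Type*} [Fintype ι]

/-- The matrix of the `ι`-fold tensor power of the linear map with matrix `M`, in the product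
bases, whose elements are indexed by functions on `ι`. -/
def tensorPower (ι : Type*) [Fintype ι] (M : Matrix κ κ' R) : Matrix (ι → κ) (ι → κ') R :=
  Matrix.of fun c d => ∏ i, M (c i) (d i)

lemma tensorPower_apply (M : Matrix κ κ' R) (c : ι → κ) (d : ι → κ') :
    tensorPower ι M c d = ∏ i, M (c i) (d i) := rfl

lemma tensorPower_transpose (M : Matrix κ κ' R) :
    tensorPower ι Mᵀ = (tensorPower ι M)ᵀ := rfl

lemma tensorPower_mul [DecidableEq ι] [Fintype κ'] (M : Matrix κ κ' R) (N : Matrix κ' κ'' R) :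
    tensorPower ι (M * N) = tensorPower ι M * tensorPower ι N := by
  ext c d
  simp only [tensorPower_apply, Matrix.mul_apply, Fintype.prod_sum, Finset.prod_mul_distrib]

lemma tensorPower_permMatrix_apply [DecidableEq κ] (σ : Equiv.Perm κ) (c d : ι → κ) :
    tensorPower ι (σ.permMatrix R) c d = if d = σ ∘ c then 1 else 0 := by
  simp [tensorPower_apply, PEquiv.toMatrix_apply, Finset.prod_ite_zero, funext_iff, eq_comm]

end TensorPower

section Contraction

open scoped Matrix

variable {R : Type*} [CommSemiring R] {κ κ' J L : Type*} [Fintype J] [DecidableEq J] [Fintype L]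
  {p q : ℕ}

lemma prod_mul_mul_transpose_apply [Fintype κ'] (Q : Matrix κ κ' R) (H : Matrix κ' κ' R)
    (e : L × Bool ≃ J × Fin p) (φ : J × Fin p → κ) :
    ∏ i, (Q * H * Qᵀ) (φ (e (i, false))) (φ (e (i, true))) =
      ∑ ψ : J × Fin p → κ', (∏ i, H (ψ (e (i, false))) (ψ (e (i, true)))) *
        tensorPower (J × Fin p) Q φ ψ := by
  classical
  let E : (J × Fin p → κ') ≃ (L → κ') × (L → κ') :=
    ((((Equiv.prodComm Bool L).trans e).arrowCongr (Equiv.refl κ')).symm.trans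
      (Equiv.curry Bool L κ')).trans (Equiv.boolArrowEquivProd _)
  have htensor : ∏ i, (Q * H * Qᵀ) (φ (e (i, false))) (φ (e (i, true))) =
      tensorPower L (Q * H * Qᵀ) (fun i => φ (e (i, false))) fun i => φ (e (i, true)) :=
    rfl
  rw [htensor, tensorPower_mul, tensorPower_mul, tensorPower_transpose, Matrix.mul_apply]
  simp only [Matrix.mul_apply, Finset.sum_mul]
  rw [Finset.sum_comm, ← Fintype.sum_prod_type', ← E.sum_comp]
  refine Finset.sum_congr rfl fun ψ _ => ?_
  rw [tensorPower_apply _ φ ψ, ← e.prod_comp, Fintype.prod_prod_type]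
  simp only [Fintype.prod_bool, Finset.prod_mul_distrib]
  simp only [tensorPower_apply, Matrix.transpose_apply]
  change (∏ i, Q _ (ψ (e (i, false)))) * (∏ i, H (ψ (e (i, false))) (ψ (e (i, true)))) *
    (∏ i, Q _ (ψ (e (i, true)))) = _
  ring

variable [Fintype κ]

/-- The complete contraction with `H` of the product of copies, indexed by `J`, of the tensor with
components `f`. The slots of all the copies are `J × Fin p`, and `i : L` contracts the slots
`e (i, false)` and `e (i, true)`. -/
def completeContraction (H : Matrix κ κ R) (f : (Fin p → κ) → R) (e : L × Bool ≃ J × Fin p) : R :=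
  ∑ φ : J × Fin p → κ,
    (∏ i, H (φ (e (i, false))) (φ (e (i, true)))) * ∏ j, f fun s => φ (j, s)

lemma sum_tensorPower_mul_prod (Q : Matrix κ κ' R) (f : (Fin p → κ) → R) (ψ : J × Fin p → κ') :
    ∑ φ : J × Fin p → κ, tensorPower (J × Fin p) Q φ ψ * ∏ j, f (fun s => φ (j, s)) =
      ∏ j, (f ᵥ* tensorPower (Fin p) Q) fun s => ψ (j, s) := by
  simp only [Matrix.vecMul, dotProduct, Fintype.prod_sum, tensorPower_apply, Fintype.prod_prod_type,
    Finset.prod_mul_distrib]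
  rw [← (Equiv.curry J (Fin p) κ).sum_comp]
  exact Finset.sum_congr rfl fun φ _ => mul_comm _ _

lemma completeContraction_conj [Fintype κ'] (Q : Matrix κ κ' R) (H : Matrix κ' κ' R)
    (f : (Fin p → κ) → R) (e : L × Bool ≃ J × Fin p) :
    completeContraction (Q * H * Qᵀ) f e =
      completeContraction H (f ᵥ* tensorPower (Fin p) Q) e := by
  simp only [completeContraction, prod_mul_mul_transpose_apply, Finset.sum_mul]
  rw [Finset.sum_comm]
  simp only [mul_assoc, ← Finset.mul_sum, sum_tensorPower_mul_prod]

/-- The square `F_{a…} F^{a…}` of the tensor with components `f`, indices being raised by `H`. -/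
def sqNorm (H : Matrix κ κ R) (f : (Fin p → κ) → R) : R :=
  f ⬝ᵥ tensorPower (Fin p) H *ᵥ f

lemma sqNorm_eq_completeContraction (H : Matrix κ κ R) (f : (Fin p → κ) → R) :
    sqNorm H f = completeContraction H f (Equiv.prodComm (Fin p) Bool) := by
  let E : (Bool × Fin p → κ) ≃ (Fin p → κ) × (Fin p → κ) :=
    (Equiv.curry Bool (Fin p) κ).trans (Equiv.boolArrowEquivProd _)
  simp only [sqNorm, dotProduct, Matrix.mulVec, Finset.mul_sum]
  rw [← Fintype.sum_prod_type', ← E.sum_comp]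
  refine Finset.sum_congr rfl fun φ _ => ?_
  rw [Fintype.prod_bool, tensorPower_apply]
  change f (fun s => φ (false, s)) * ((∏ i, H (φ (false, i)) (φ (true, i))) *
    f fun s => φ (true, s)) = _
  simp only [Equiv.prodComm_apply, Prod.swap_prod_mk]
  ring

/-- The components of a tensor as a matrix, the first slot indexing the rows. -/
def slotMatrix (f : (Fin (q + 1) → κ) → R) : Matrix κ (Fin q → κ) R :=
  Matrix.of fun a c => f (Fin.cons a c)

/-- The quadratic concomitant `F_{a c…} F_b^{c…}` of the tensor with components `f`, indices being
raised by `H`. -/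
def contractedSquare (H : Matrix κ κ R) (f : (Fin (q + 1) → κ) → R) : Matrix κ κ R :=
  slotMatrix f * tensorPower (Fin q) H * (slotMatrix f)ᵀ

lemma contractedSquare_isSymm {H : Matrix κ κ R} (hH : H.IsSymm)
    (f : (Fin (q + 1) → κ) → R) : (contractedSquare H f).IsSymm := by
  rw [Matrix.IsSymm, contractedSquare, Matrix.transpose_mul, Matrix.transpose_mul,
    Matrix.transpose_transpose, ← tensorPower_transpose, hH, Matrix.mul_assoc]

lemma slotMatrix_vecMul (Q : Matrix κ κ' R) (f : (Fin (q + 1) → κ) → R) :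
    slotMatrix (f ᵥ* tensorPower (Fin (q + 1)) Q) =
      Qᵀ * slotMatrix f * tensorPower (Fin q) Q := by
  ext a c
  simp only [slotMatrix, Matrix.mul_apply, Matrix.vecMul, dotProduct, Matrix.of_apply,
    Matrix.transpose_apply, tensorPower_apply, Finset.sum_mul]
  rw [Finset.sum_comm, ← Fintype.sum_prod_type', ← (Fin.consEquiv fun _ => κ).sum_comp]
  refine Finset.sum_congr rfl fun d _ => ?_
  change f (Fin.cons d.1 d.2) * ∏ i, Q ((Fin.cons d.1 d.2 : Fin (q + 1) → κ) i) _ = _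
  simp only [Fin.prod_univ_succ, Fin.cons_zero, Fin.cons_succ]
  ring

lemma contractedSquare_vecMul [Fintype κ'] (Q : Matrix κ κ' R) (H : Matrix κ' κ' R)
    (f : (Fin (q + 1) → κ) → R) :
    contractedSquare H (f ᵥ* tensorPower (Fin (q + 1)) Q) =
      Qᵀ * contractedSquare (Q * H * Qᵀ) f * Q := by
  simp only [contractedSquare, slotMatrix_vecMul, tensorPower_mul, tensorPower_transpose,
    Matrix.transpose_mul, Matrix.transpose_transpose, Matrix.mul_assoc]

/-- The contraction pattern of `F_{a c…} F_b^{c…} F^b_{d…} F^{a d…}`: the four factors are indexed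
by `Bool × Bool`, those with the same first component being contracted in all slots but the
first. -/
def cyclicPattern (q : ℕ) :
    (Bool × Fin (q + 1)) × Bool ≃ (Bool × Bool) × Fin (q + 1) where
  toFun y := (if y.1.2 = 0 then (if y.2 then !y.1.1 else y.1.1, !y.2) else (y.1.1, y.2), y.1.2)
  invFun y := if y.2 = 0 then ((if y.1.2 then y.1.1 else !y.1.1, 0), !y.1.2)
    else ((y.1.1, y.2), y.1.2)
  left_inv := by
    rintro ⟨⟨i, s⟩, t⟩
    by_cases hs : s = 0 <;> cases t <;> simp [hs]
  right_inv := by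
    rintro ⟨⟨i, t⟩, s⟩
    by_cases hs : s = 0 <;> cases t <;> simp [hs]

lemma trace_mul_self_eq_sum (M : Matrix κ κ R) :
    (M * M).trace = ∑ α : Bool → κ, ∏ i, M (α i) (α !i) := by
  rw [← (Equiv.boolArrowEquivProd κ).symm.sum_comp, Fintype.sum_prod_type, Finset.sum_comm]
  simp only [Matrix.trace, Matrix.diag, Matrix.mul_apply, Fintype.prod_bool]
  rfl

/-- An assignment of indices to the slots of `cyclicPattern q`, split into the first indices of the
copies `(i, false)` and the remaining indices. -/
def slotAssignmentEquiv (q : ℕ) (κ : Type*) :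
    (Bool → κ) × (Bool → κ × (Fin q → κ) × (Fin q → κ)) ≃
      ((Bool × Bool) × Fin (q + 1) → κ) where
  toFun d := fun y => (Fin.cons (if y.1.2 then (d.2 y.1.1).1 else d.1 y.1.1)
    (if y.1.2 then (d.2 y.1.1).2.2 else (d.2 y.1.1).2.1) : Fin (q + 1) → κ) y.2
  invFun φ := (fun i => φ ((i, false), 0), fun i => (φ ((i, true), 0),
    fun s => φ ((i, false), s.succ), fun s => φ ((i, true), s.succ)))
  left_inv := by
    rintro ⟨α, χ⟩
    simp
  right_inv := by
    intro φ
    funext ⟨⟨i, t⟩, s⟩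
    cases s using Fin.cases <;> cases t <;> simp

lemma contractedSquare_mul_apply (H : Matrix κ κ R) (f : (Fin (q + 1) → κ) → R) (a a' : κ) :
    (contractedSquare H f * H) a a' = ∑ y : κ × (Fin q → κ) × (Fin q → κ),
      f (Fin.cons a y.2.1) * (∏ i, H (y.2.1 i) (y.2.2 i)) * f (Fin.cons y.1 y.2.2) * H y.1 a' := by
  simp only [Matrix.mul_apply, contractedSquare, Fintype.sum_prod_type, Finset.sum_mul, slotMatrix,
    Matrix.of_apply, Matrix.transpose_apply, tensorPower_apply]
  exact Finset.sum_congr rfl fun b _ => Finset.sum_comm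

lemma trace_contractedSquare_mul_self_eq_completeContraction (H : Matrix κ κ R)
    (f : (Fin (q + 1) → κ) → R) :
    (contractedSquare H f * H * (contractedSquare H f * H)).trace =
      completeContraction H f (cyclicPattern q) := by
  simp only [trace_mul_self_eq_sum, contractedSquare_mul_apply, Fintype.prod_sum]
  rw [← Fintype.sum_prod_type', completeContraction, ← (slotAssignmentEquiv q κ).sum_comp]
  refine Finset.sum_congr rfl fun d _ => ?_
  rw [Fintype.prod_prod_type, Fintype.prod_prod_type, ← Finset.prod_mul_distrib]
  refine Finset.prod_congr rfl fun i _ => ?_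
  simp only [Fin.prod_univ_succ, Fintype.prod_bool, cyclicPattern, slotAssignmentEquiv,
    Equiv.coe_fn_mk, Fin.cons_zero, Fin.cons_succ, if_true, Fin.succ_ne_zero, if_false,
    Bool.false_eq_true, Bool.not_true, Bool.not_false]
  ring

end Contraction

section Frame

open Module
open scoped Matrix

variable {R V κ κ' : Type*} [CommRing R] [AddCommGroup V] [Module R V] {p q : ℕ}

/-- The components of an alternating form in a basis. -/
def components (b : Basis κ R V) (φ : V [⋀^Fin p]→ₗ[R] R) (c : Fin p → κ) : R := φ (b ∘ c)

lemma components_eq_vecMul [Fintype κ] (b : Basis κ R V) (b' : Basis κ' R V)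
    (φ : V [⋀^Fin p]→ₗ[R] R) :
    components b' φ = components b φ ᵥ* tensorPower (Fin p) (b.toMatrix b') := by
  ext c
  have hb' : (b' ∘ c : Fin p → V) = fun m => ∑ a, b.toMatrix b' a (c m) • b a :=
    funext fun m => (b.sum_toMatrix_smul_self b' (c m)).symm
  simp only [components, hb']
  rw [← AlternatingMap.coe_multilinearMap, MultilinearMap.map_sum]
  simp only [MultilinearMap.map_smul_univ, smul_eq_mul, Matrix.vecMul, dotProduct,
    tensorPower_apply]
  exact Finset.sum_congr rfl fun d _ => mul_comm _ _

lemma components_eq_zero_of_eq (b : Basis κ R V) (φ : V [⋀^Fin p]→ₗ[R] R) {c : Fin p → κ}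
    {i j : Fin p} (hij : i ≠ j) (h : c i = c j) : components b φ c = 0 :=
  φ.map_eq_zero_of_eq _ (congrArg b h) hij

lemma components_comp_perm (b : Basis κ R V) (φ : V [⋀^Fin p]→ₗ[R] R) (c : Fin p → κ)
    (σ : Equiv.Perm (Fin p)) :
    components b φ (c ∘ σ) = Equiv.Perm.sign σ • components b φ c :=
  φ.map_perm (b ∘ c) σ

lemma components_cons_eq_zero_of_mem (e : Basis κ R V) (φ : V [⋀^Fin (q + 1)]→ₗ[R] R)
    {z : κ} (c : Fin q → κ) (i : Fin q)
    (hi : c i = z) : components e φ (Fin.cons z c) = 0 :=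
  components_eq_zero_of_eq e φ (Fin.succ_ne_zero i) (by simpa using hi)

lemma components_swap_comp [DecidableEq κ] (b : Basis κ R V) (φ : V [⋀^Fin p]→ₗ[R] R)
    (c : Fin p → κ) {i j : Fin p} (hij : i ≠ j) :
    components b φ (Equiv.swap (c i) (c j) ∘ c) = -components b φ c := by
  by_cases hc : Function.Injective c
  · have hswap : Equiv.swap (c i) (c j) ∘ c = c ∘ Equiv.swap i j :=
      funext fun m => (hc.map_swap i j m).symm
    rw [hswap, components_comp_perm, Equiv.Perm.sign_swap hij, Units.neg_smul, one_smul]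
  · obtain ⟨k, l, hkl, hne⟩ := Function.not_injective_iff.1 hc
    rw [components_eq_zero_of_eq b φ hne hkl,
      components_eq_zero_of_eq b φ hne (congrArg (Equiv.swap (c i) (c j)) hkl), neg_zero]

lemma inv_toMatrix_eq_conj [Fintype κ] [DecidableEq κ] (b b' : Basis κ R V)
    (B : LinearMap.BilinForm R V) :
    (B.toMatrix b)⁻¹ = b.toMatrix b' * (B.toMatrix b')⁻¹ * (b.toMatrix b')ᵀ := by
  have := b.invertibleToMatrix b'
  rw [← LinearMap.BilinForm.toMatrix_mul_basis_toMatrix b b' B, Matrix.mul_inv_rev,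
    Matrix.mul_inv_rev, ← Matrix.mul_assoc, ← Matrix.mul_assoc, Matrix.mul_inv_of_invertible,
    Matrix.one_mul, Matrix.mul_assoc, Matrix.inv_mul_of_invertible, Matrix.mul_one]

/-- The exterior product `λ ∧ φ`, up to a positive factor: the alternating sum of
`λ (v (σ 0)) * φ (v (σ 1), …, v (σ p))` over all permutations `σ`. -/
def covectorWedge (lam : Dual R V) (φ : V [⋀^Fin p]→ₗ[R] R) : V [⋀^Fin (p + 1)]→ₗ[R] R :=
  MultilinearMap.alternatization (lam.smulRight φ.toMultilinearMap).uncurryLeft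

lemma covectorWedge_apply (lam : Dual R V) (φ : V [⋀^Fin p]→ₗ[R] R) (v : Fin (p + 1) → V) :
    covectorWedge lam φ v = ∑ σ : Equiv.Perm (Fin (p + 1)),
      ((Equiv.Perm.sign σ : ℤ) : R) * (lam (v (σ 0)) * φ fun m => v (σ m.succ)) := by
  simp only [covectorWedge, MultilinearMap.alternatization_apply, MultilinearMap.domDomCongr_apply,
    LinearMap.uncurryLeft_apply, Units.smul_def, zsmul_eq_mul]
  rfl

lemma curryLeft_basis_apply (e : Basis κ R V) (z : κ) (φ : V [⋀^Fin (q + 1)]→ₗ[R] R)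
    (c : Fin q → κ) : φ.curryLeft (e z) (e ∘ c) = components e φ (Fin.cons z c) := by
  rw [components, AlternatingMap.curryLeft_apply_apply, Matrix.vecCons]
  congr 1
  funext m
  cases m using Fin.cases <;> rfl

lemma curryLeft_basis_eq_zero_iff (e : Basis κ R V) (z : κ) (φ : V [⋀^Fin (q + 1)]→ₗ[R] R) :
    φ.curryLeft (e z) = 0 ↔ ∀ c, components e φ c ≠ 0 → ∀ i, c i ≠ z := by
  constructor
  · rintro h c hc i rfl
    have h0 := curryLeft_basis_apply e (c i) φ (Fin.tail (c ∘ Equiv.swap 0 i))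
    have hcons : Fin.cons (c i) (Fin.tail (c ∘ Equiv.swap 0 i)) = c ∘ Equiv.swap 0 i := by
      simpa using Fin.cons_self_tail (c ∘ Equiv.swap 0 i)
    rw [h, AlternatingMap.zero_apply, hcons, components_comp_perm, eq_comm,
      smul_eq_zero_iff_eq] at h0
    exact hc h0
  · refine fun h => e.ext_alternating fun c _ => by_contra fun hne => ?_
    exact h _ (fun h0 => hne ((curryLeft_basis_apply e z φ c).trans h0)) 0 rfl

lemma covectorWedge_coord_basis_cons (e : Basis κ R V) (o : κ) (φ : V [⋀^Fin p]→ₗ[R] R)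
    {c : Fin p → κ} (hc : ∀ i, c i ≠ o) :
    covectorWedge (e.coord o) φ (e ∘ Fin.cons o c) = p.factorial • components e φ c := by
  rw [covectorWedge_apply, ← Equiv.Perm.decomposeFin.symm.sum_comp, Fintype.sum_prod_type,
    Finset.sum_eq_single 0 ?_ (by simp)]
  · have hterm (σ : Equiv.Perm (Fin p)) :
        ((Equiv.Perm.sign σ : ℤ) : R) * φ (fun m => e (c (σ m))) = components e φ c := by
      change _ * components e φ (c ∘ σ) = _
      rw [components_comp_perm, Units.smul_def, zsmul_eq_mul, ← mul_assoc, ← Int.cast_mul,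
        ← Units.val_mul, Int.units_mul_self, Units.val_one, Int.cast_one, one_mul]
    simp [hterm, Fintype.card_perm]
  · intro i _ hi
    obtain ⟨k, rfl⟩ := Fin.exists_succ_eq_of_ne_zero hi
    simp [hc]

lemma covectorWedge_coord_eq_zero_iff [IsAddTorsionFree R] (e : Basis κ R V) (o : κ)
    (φ : V [⋀^Fin p]→ₗ[R] R) :
    covectorWedge (e.coord o) φ = 0 ↔ ∀ c, components e φ c ≠ 0 → ∃ i, c i = o := by
  constructor
  · intro h c hc
    by_contra! ho
    have := covectorWedge_coord_basis_cons e o φ ho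
    rw [h, AlternatingMap.zero_apply, eq_comm, smul_eq_zero_iff_right p.factorial_ne_zero] at this
    exact hc this
  · intro h
    refine e.ext_alternating fun c hc => ?_
    rw [covectorWedge_apply, AlternatingMap.zero_apply]
    refine Finset.sum_eq_zero fun σ _ => ?_
    by_cases h0 : c (σ 0) = o
    · have hno : ∀ i : Fin p, c (σ i.succ) ≠ o := fun i hi =>
        Fin.succ_ne_zero i (σ.injective (hc (hi.trans h0.symm)))
      have hφ : components e φ (fun i => c (σ i.succ)) = 0 :=
        by_contra fun hne => (h _ hne).elim hno
      exact mul_eq_zero_of_right _ (mul_eq_zero_of_right _ hφ)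
    · simp [h0]

lemma curryLeft_eq_zero_iff [Fintype κ] (b : Basis κ R V) (φ : V [⋀^Fin (q + 1)]→ₗ[R] R) (ℓ : V) :
    φ.curryLeft ℓ = 0 ↔ ∀ v : Fin (q + 1) → κ,
      ∑ a, b.repr ℓ a * components b φ (Function.update v 0 a) = 0 := by
  have hcurry (v : Fin (q + 1) → κ) : φ.curryLeft ℓ (b ∘ Fin.tail v) =
      ∑ a, b.repr ℓ a * components b φ (Function.update v 0 a) := by
    have hsum := φ.map_update_sum Finset.univ 0 (fun a => b.repr ℓ a • b a) (b ∘ v)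
    simp only [b.sum_repr, φ.map_update_smul, smul_eq_mul] at hsum
    have hcomp (w : V) : Function.update (b ∘ v) 0 w = Matrix.vecCons w (b ∘ Fin.tail v) := by
      rw [← Fin.cons_self_tail (b ∘ v), Fin.update_cons_zero]
      rfl
    simpa only [components, Function.comp_update, hcomp, AlternatingMap.curryLeft_apply_apply]
      using hsum
  refine ⟨fun h v => by rw [← hcurry, h, AlternatingMap.zero_apply],
    fun h => b.ext_alternating fun c _ => ?_⟩
  rcases isEmpty_or_nonempty κ with _ | ⟨⟨a⟩⟩
  · rw [b.repr.injective (Subsingleton.elim (b.repr ℓ) (b.repr 0)), map_zero]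
  · exact (hcurry (Fin.cons a c)).trans (h _)

lemma covectorWedge_eq_zero_iff (b : Basis κ R V) (lam : Dual R V) (φ : V [⋀^Fin p]→ₗ[R] R) :
    covectorWedge lam φ = 0 ↔ ∀ c : Fin (p + 1) → κ, ∑ σ : Equiv.Perm (Fin (p + 1)),
      ((Equiv.Perm.sign σ : ℤ) : R) *
        (lam (b (c (σ 0))) * components b φ fun m => c (σ m.succ)) = 0 := by
  have hwedge (c : Fin (p + 1) → κ) := covectorWedge_apply lam φ (b ∘ c)
  exact ⟨fun h c => (hwedge c).symm.trans (by rw [h]; rfl),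
    fun h => b.ext_alternating fun c _ => (hwedge c).trans (h c)⟩

lemma exists_components_eq [IsAddTorsionFree R] [Finite κ] (b : Basis κ R V)
    {f : (Fin p → κ) → R}
    (hf : ∀ (c : Fin p → κ) (σ : Equiv.Perm (Fin p)),
      f (c ∘ σ) = ((Equiv.Perm.sign σ : ℤ) : R) * f c) :
    ∃ φ : V [⋀^Fin p]→ₗ[R] R, components b φ = f := by
  classical
  cases nonempty_fintype κ
  let M : MultilinearMap R (fun _ : Fin p => V) R := ∑ c : Fin p → κ,
    f c • (MultilinearMap.mkPiAlgebra R (Fin p) R).compLinearMap fun m => b.coord (c m)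
  have hM (v : Fin p → V) : M v = ∑ c : Fin p → κ, f c * ∏ m, b.coord (c m) (v m) := by
    simp [M]
  have hswap (v : Fin p → V) (i j : Fin p) (hij : i ≠ j) : M (v ∘ Equiv.swap i j) = -M v := by
    rw [hM, hM, ← ((Equiv.swap i j).arrowCongr (Equiv.refl κ)).sum_comp, ← Finset.sum_neg_distrib]
    refine Finset.sum_congr rfl fun c _ => ?_
    change f (c ∘ Equiv.swap i j) * ∏ m, b.coord (c (Equiv.swap i j m)) (v (Equiv.swap i j m)) = _
    rw [hf, Equiv.Perm.sign_swap hij,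
      Equiv.prod_comp (Equiv.swap i j) fun m => b.coord (c m) (v m)]
    simp
  refine ⟨⟨M, fun v i j hv hij => ?_⟩, funext fun c => ?_⟩
  · have hvv : v ∘ Equiv.swap i j = v := by
      rw [Equiv.comp_swap_eq_update, hv, Function.update_eq_self, ← hv, Function.update_eq_self]
    exact self_eq_neg.1 ((congrArg M hvv).symm.trans (hswap v i j hij))
  · change M (b ∘ c) = f c
    rw [hM, Finset.sum_eq_single c]
    · simp
    · intro d _ hd
      obtain ⟨m, hm⟩ := Function.ne_iff.1 hd
      refine mul_eq_zero_of_right _ (Finset.prod_eq_zero (Finset.mem_univ m) ?_)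
      simp [hm.symm]
    · simp

lemma exists_basis_toMatrix_eq [Fintype κ] [DecidableEq κ] (b : Basis κ R V) {Q : Matrix κ κ R}
    (hQ : IsUnit Q.det) : ∃ b' : Basis κ R V, b.toMatrix b' = Q := by
  refine ⟨b.map (Matrix.toLinearEquiv b Q hQ), ?_⟩
  have hmap : ⇑(b.map (Matrix.toLinearEquiv b Q hQ)) = Matrix.toLin b b Q ∘ b := rfl
  rw [hmap, ← LinearMap.toMatrix_eq_basisToMatrix, LinearMap.toMatrix_toLin]

end Frame

section NullFrameComponents

open Module

variable {R ι κ : Type*} [DecidableEq κ] {z o : κ} {p q : ℕ}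

/-- The array `f` has the shape of the components of a form of type N in a null frame whose null
vectors are labelled `z` and `o`: only boost weight `-1` occurs. -/
def IsTypeNArray [Zero R] (z o : κ) (f : (Fin p → κ) → R) : Prop :=
  ∀ c, f c ≠ 0 → (∀ i, c i ≠ z) ∧ ∃ i, c i = o

lemma completeContraction_swap_eq_zero [CommSemiring R] [Fintype κ] {J L : Type*} [Fintype J]
    [DecidableEq J] [Nonempty J] [Fintype L] {f : (Fin p → κ) → R} (hf : IsTypeNArray z o f)
    (e : L × Bool ≃ J × Fin p) : completeContraction ((Equiv.swap z o).permMatrix R) f e = 0 := by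
  refine Finset.sum_eq_zero fun φ _ => by_contra fun hne => ?_
  have hlink (i : L) : Equiv.swap z o (φ (e (i, false))) = φ (e (i, true)) := by
    by_contra h
    refine hne (mul_eq_zero_of_left (Finset.prod_eq_zero (Finset.mem_univ i) ?_) _)
    simp [PEquiv.toMatrix_apply, h]
  have hfactor (j : J) : f (fun s => φ (j, s)) ≠ 0 := fun h =>
    hne (mul_eq_zero_of_right _ (Finset.prod_eq_zero (Finset.mem_univ j) h))
  have hz (y : L × Bool) : φ (e y) ≠ z := (hf _ (hfactor (e y).1)).1 (e y).2
  obtain ⟨s, hs⟩ := (hf _ (hfactor (Classical.arbitrary J))).2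
  obtain ⟨⟨i, t⟩, hi⟩ := e.surjective (Classical.arbitrary J, s)
  rw [← hi] at hs
  cases t
  · exact hz (i, true) (by rw [← hlink, hs, Equiv.swap_apply_right])
  · exact hz (i, false) (by rw [← Equiv.swap_apply_eq_iff.2 (hlink i).symm, hs]; simp)

lemma sqNorm_permMatrix [CommSemiring R] [Fintype κ] (σ : Equiv.Perm κ) (f : (Fin p → κ) → R) :
    sqNorm (σ.permMatrix R) f = ∑ c, f c * f (σ ∘ c) := by
  simp [sqNorm, dotProduct, Matrix.mulVec, tensorPower_permMatrix_apply]

lemma contractedSquare_permMatrix_apply [CommSemiring R] [Fintype κ] (σ : Equiv.Perm κ)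
    (f : (Fin (q + 1) → κ) → R) (a b : κ) :
    contractedSquare (σ.permMatrix R) f a b =
      ∑ c, f (Fin.cons a c) * f (Fin.cons b (σ ∘ c)) := by
  simp only [contractedSquare, slotMatrix, Matrix.mul_apply, Matrix.of_apply,
    Matrix.transpose_apply, tensorPower_permMatrix_apply, mul_ite, mul_one, mul_zero,
    Finset.sum_mul, ite_mul, zero_mul]
  rw [Finset.sum_comm]
  simp

lemma mul_comp_swap_eq_ite [MulZeroClass R] {h : (ι → κ) → R} (hz : ∀ c i, c i = z → h c = 0)
    (c : ι → κ) [Decidable (∃ i, c i = o)] :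
    h c * h (Equiv.swap z o ∘ c) = if ∃ i, c i = o then 0 else h c * h c := by
  by_cases hcz : ∃ i, c i = z
  · obtain ⟨i, hi⟩ := hcz
    simp [hz c i hi]
  split_ifs with hco
  · obtain ⟨i, hi⟩ := hco
    rw [hz (Equiv.swap z o ∘ c) i (by simp [hi]), mul_zero]
  · push Not at hcz hco
    rw [show Equiv.swap z o ∘ c = c from
      funext fun i => Equiv.swap_apply_of_ne_of_ne (hcz i) (hco i)]

variable [CommRing R] [LinearOrder R] [IsStrictOrderedRing R]

lemma mul_comp_swap_nonneg {h : (ι → κ) → R} (hz : ∀ c i, c i = z → h c = 0) (c : ι → κ) :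
    0 ≤ h c * h (Equiv.swap z o ∘ c) := by
  classical
  rw [mul_comp_swap_eq_ite hz]
  split_ifs
  exacts [le_rfl, mul_self_nonneg _]

lemma eq_zero_of_sum_mul_comp_swap_eq_zero [Fintype ι] [DecidableEq ι] [Fintype κ]
    {h : (ι → κ) → R} (hz : ∀ c i, c i = z → h c = 0)
    (hsum : ∑ c, h c * h (Equiv.swap z o ∘ c) = 0) {c : ι → κ} (hc : ∀ i, c i ≠ o) :
    h c = 0 := by
  have := (Finset.sum_eq_zero_iff_of_nonneg fun c _ => mul_comp_swap_nonneg hz c).1 hsum c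
    (Finset.mem_univ c)
  rwa [mul_comp_swap_eq_ite hz, if_neg (by simpa using hc), mul_self_eq_zero] at this

variable {V : Type*} [AddCommGroup V] [Module R V] [Fintype κ]

lemma contractedSquare_swap_diag_nonneg (z o : κ) (e : Basis κ R V) (φ : V [⋀^Fin (q + 1)]→ₗ[R] R) :
    0 ≤ contractedSquare ((Equiv.swap z o).permMatrix R) (components e φ) z z := by
  rw [contractedSquare_permMatrix_apply]
  exact Finset.sum_nonneg fun c _ =>
    mul_comp_swap_nonneg (components_cons_eq_zero_of_mem e φ) c

lemma curryLeft_basis_eq_zero_of_contractedSquare (e : Basis κ R V)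
    (φ : V [⋀^Fin (q + 1)]→ₗ[R] R)
    (hzz : contractedSquare ((Equiv.swap z o).permMatrix R) (components e φ) z z = 0)
    (hzo : contractedSquare ((Equiv.swap z o).permMatrix R) (components e φ) z o = 0) :
    φ.curryLeft (e z) = 0 := by
  rw [contractedSquare_permMatrix_apply] at hzz hzo
  have hno {c : Fin q → κ} (hc : ∀ i, c i ≠ o) : components e φ (Fin.cons z c) = 0 :=
    eq_zero_of_sum_mul_comp_swap_eq_zero (components_cons_eq_zero_of_mem e φ) hzz hc
  have hterm (c : Fin q → κ) :
      components e φ (Fin.cons z c) * components e φ (Fin.cons o (Equiv.swap z o ∘ c)) =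
        -(components e φ (Fin.cons z c) * components e φ (Fin.cons z c)) := by
    by_cases hc : ∃ i, c i = o
    · obtain ⟨i, hi⟩ := hc
      have hcons : (Fin.cons o (Equiv.swap z o ∘ c) : Fin (q + 1) → κ) =
          Equiv.swap z o ∘ Fin.cons z c := by
        funext m
        cases m using Fin.cases <;> simp
      have hswap := components_swap_comp e φ (Fin.cons z c) (Fin.succ_ne_zero i).symm
      rw [Fin.cons_zero, Fin.cons_succ, hi] at hswap
      rw [hcons, hswap, mul_neg]
    · simp [hno (by simpa using hc)]
  simp only [hterm, Finset.sum_neg_distrib, neg_eq_zero] at hzo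
  rw [Finset.sum_eq_zero_iff_of_nonneg fun c _ => mul_self_nonneg _] at hzo
  refine e.ext_alternating fun c _ => ?_
  exact (curryLeft_basis_apply e z φ c).trans (mul_self_eq_zero.1 (hzo c (Finset.mem_univ c)))

lemma isTypeNArray_components (e : Basis κ R V) (φ : V [⋀^Fin (q + 1)]→ₗ[R] R)
    (hz : φ.curryLeft (e z) = 0)
    (hsq : sqNorm ((Equiv.swap z o).permMatrix R) (components e φ) = 0) :
    IsTypeNArray z o (components e φ) := by
  rw [curryLeft_basis_eq_zero_iff] at hz
  rw [sqNorm_permMatrix] at hsq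
  refine fun c hc => ⟨hz c hc, by_contra fun ho => hc ?_⟩
  exact eq_zero_of_sum_mul_comp_swap_eq_zero (fun c i hi => by_contra fun hc => hz c hc i hi) hsq
    (by simpa using ho)

end NullFrameComponents

section Minkowski

open scoped Matrix

variable {κ : Type*} [Fintype κ]

lemma exists_eq_mul_unit_of_ne [Nontrivial κ] (z : κ) (u : κ → ℝ) :
    ∃ (r : ℝ) (s : κ → ℝ), 0 ≤ r ∧ s z = 0 ∧ s ⬝ᵥ s = 1 ∧ ∀ i ≠ z, u i = r * s i := by
  classical
  obtain ⟨o, ho⟩ := exists_ne z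
  let v := Function.update u z 0
  have hv {i : κ} (hi : i ≠ z) : v i = u i := Function.update_of_ne hi _ _
  by_cases h0 : v = 0
  · refine ⟨0, Pi.single o 1, le_rfl, by simp [ho.symm], by simp, fun i hi => ?_⟩
    rw [zero_mul, ← hv hi, h0, Pi.zero_apply]
  · have hpos : 0 < v ⬝ᵥ v :=
      lt_of_le_of_ne (Finset.sum_nonneg fun i _ => mul_self_nonneg (v i))
        fun h => h0 (dotProduct_self_eq_zero.1 h.symm)
    refine ⟨√(v ⬝ᵥ v), (√(v ⬝ᵥ v))⁻¹ • v, Real.sqrt_nonneg _, by simp [v], ?_,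
      fun i hi => ?_⟩
    · rw [smul_dotProduct, dotProduct_smul, smul_smul, ← mul_inv, Real.mul_self_sqrt hpos.le,
        smul_eq_mul, inv_mul_cancel₀ hpos.ne']
    · rw [Pi.smul_apply, smul_eq_mul, mul_inv_cancel_left₀ (Real.sqrt_ne_zero'.2 hpos), hv hi]

variable [DecidableEq κ] {z o : κ}

/-- The Gram matrix of a Lorentzian orthonormal frame whose timelike vector is labelled `z`. -/
def minkowski (z : κ) : Matrix κ κ ℝ := Matrix.diagonal fun i => if i = z then -1 else 1

lemma minkowski_mulVec (z : κ) (v : κ → ℝ) :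
    minkowski z *ᵥ v = v - Pi.single z (2 * v z) := by
  ext i
  rw [minkowski, Matrix.mulVec_diagonal]
  by_cases hi : i = z
  · subst hi; simp only [↓reduceIte, Pi.sub_apply, Pi.single_eq_same]; ring
  · simp [hi]

lemma dotProduct_minkowski_mulVec (z : κ) (v w : κ → ℝ) :
    v ⬝ᵥ minkowski z *ᵥ w = v ⬝ᵥ w - 2 * (v z * w z) := by
  rw [minkowski_mulVec, dotProduct_sub, dotProduct_single]
  ring

lemma minkowski_mul_self (z : κ) : minkowski z * minkowski z = 1 := by
  rw [minkowski, Matrix.diagonal_mul_diagonal, ← Matrix.diagonal_one]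
  congr 1
  funext i
  split_ifs <;> norm_num

lemma inv_minkowski (z : κ) : (minkowski z)⁻¹ = minkowski z :=
  Matrix.inv_eq_left_inv (minkowski_mul_self z)

lemma commute_minkowski {D : Matrix κ κ ℝ} (hD : D.IsSymm) (hz : ∀ i ≠ z, D z i = 0) :
    Commute D (minkowski z) := by
  ext i j
  rw [minkowski, Matrix.mul_diagonal, Matrix.diagonal_mul, mul_comm]
  by_cases hi : i = z <;> by_cases hj : j = z
  · simp [hi, hj]
  · simp [hi, hz j hj]
  · simp [hj, ← hD.apply i z, hz i hi]
  · simp [hi, hj]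

lemma trace_mul_minkowski_mul_self {D : Matrix κ κ ℝ} (hD : Commute D (minkowski z)) :
    (D * minkowski z * (D * minkowski z)).trace = (D * D).trace := by
  rw [hD.symm.mul_mul_mul_comm, minkowski_mul_self, mul_one]

lemma trace_sub_vecMulVec_mul_minkowski_mul_self {A : Matrix κ κ ℝ} (r : ℝ) {ψ : κ → ℝ}
    (hψ : ψ ⬝ᵥ minkowski z *ᵥ ψ = 0) :
    ((A - r • Matrix.vecMulVec ψ ψ) * minkowski z *
        ((A - r • Matrix.vecMulVec ψ ψ) * minkowski z)).trace =
      (A * minkowski z * (A * minkowski z)).trace -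
        2 * r * ((minkowski z *ᵥ ψ) ⬝ᵥ A *ᵥ minkowski z *ᵥ ψ) := by
  have hP : Matrix.vecMulVec ψ ψ * minkowski z = Matrix.vecMulVec ψ (minkowski z *ᵥ ψ) := by
    rw [Matrix.vecMulVec_mul, ← Matrix.mulVec_transpose, minkowski, Matrix.diagonal_transpose]
  simp only [sub_mul, mul_sub, smul_mul_assoc, mul_smul_comm, hP, Matrix.trace_sub,
    Matrix.trace_smul,
    Matrix.trace_mul_comm (Matrix.vecMulVec ψ (minkowski z *ᵥ ψ)) (A * minkowski z),
    Matrix.mul_vecMulVec, Matrix.trace_vecMulVec, ← Matrix.mulVec_mulVec, Matrix.vecMulVec_mulVec,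
    dotProduct_comm (minkowski z *ᵥ ψ), hψ, smul_eq_mul, MulOpposite.op_zero, zero_smul,
    zero_dotProduct]
  ring

theorem exists_null_mulVec_eq_zero [Nontrivial κ] {A : Matrix κ κ ℝ} (hA : A.IsSymm)
    (hnull : ∀ k, k ⬝ᵥ minkowski z *ᵥ k = 0 → 0 ≤ k ⬝ᵥ A *ᵥ k)
    (htr : (A * minkowski z * (A * minkowski z)).trace = 0) :
    ∃ l ≠ 0, l ⬝ᵥ minkowski z *ᵥ l = 0 ∧ A *ᵥ l = 0 := by
  obtain ⟨r, s, hr, hsz, hss, hAs⟩ := exists_eq_mul_unit_of_ne z (A z)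
  set ψ : κ → ℝ := Pi.single z 1 + s with hψ
  set l := minkowski z *ᵥ ψ with hl
  have hψz : ψ z = 1 := by simp [hψ, hsz]
  have hψψ : ψ ⬝ᵥ l = 0 := by
    rw [hl, dotProduct_minkowski_mulVec, hψz, hψ]
    norm_num [hss, hsz]
  have hlψ : minkowski z *ᵥ l = ψ := by
    rw [hl, Matrix.mulVec_mulVec, minkowski_mul_self, Matrix.one_mulVec]
  have hll : l ⬝ᵥ minkowski z *ᵥ l = 0 := by rw [hlψ, dotProduct_comm, hψψ]
  -- Removing a multiple of `ψ ⊗ ψ` makes the mixed entries `D z i` vanish; the contraction of `A`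
  -- with `ψ ⊗ ψ` that this subtracts from the trace has the sign given by `hnull`.
  set D := A - r • Matrix.vecMulVec ψ ψ with hDdef
  have hDsymm : D.IsSymm := hA.sub (Matrix.IsSymm.smul (Matrix.transpose_vecMulVec ψ ψ) r)
  have hDz : ∀ i ≠ z, D z i = 0 := fun i hi => by
    simp [hDdef, Matrix.vecMulVec_apply, hAs i hi, hψ, hi, hsz]
  have htrD : (D * D).trace = -(2 * r * (l ⬝ᵥ A *ᵥ l)) := by
    rw [← trace_mul_minkowski_mul_self (commute_minkowski hDsymm hDz),
      trace_sub_vecMulVec_mul_minkowski_mul_self r hψψ, htr, zero_sub]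
  have hD : D = 0 := by
    have hDD : Dᴴ * D = D * D := by rw [Matrix.conjTranspose_eq_transpose_of_trivial, hDsymm]
    refine Matrix.trace_conjTranspose_mul_self_eq_zero_iff.1 (le_antisymm ?_
      (Matrix.posSemidef_conjTranspose_mul_self D).trace_nonneg)
    rw [hDD, htrD, neg_nonpos]
    exact mul_nonneg (by positivity) (hnull l hll)
  refine ⟨l, fun h0 => ?_, hll, ?_⟩
  · rw [h0, Matrix.mulVec_zero] at hlψ
    simp [← hlψ] at hψz
  · rw [sub_eq_zero.1 hD, Matrix.smul_mulVec, Matrix.vecMulVec_mulVec, hψψ]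
    simp

lemma exists_orthogonal_mulVec_eq {v w : κ → ℝ} (hvw : v ⬝ᵥ v = w ⬝ᵥ w) :
    ∃ O ∈ Matrix.orthogonalGroup κ ℝ, O *ᵥ v = w ∧
      ∀ x, v ⬝ᵥ x = w ⬝ᵥ x → O *ᵥ x = x := by
  obtain ⟨d, hd⟩ : ∃ d, d = v - w := ⟨_, rfl⟩
  let O : Matrix κ κ ℝ := 1 - (2 / (d ⬝ᵥ d)) • Matrix.vecMulVec d d
  have hdd : d ⬝ᵥ d = 2 * (d ⬝ᵥ v) := by
    simp only [hd, sub_dotProduct, dotProduct_sub, dotProduct_comm w v, hvw]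
    ring
  have hO (x : κ → ℝ) : O *ᵥ x = x - (2 / (d ⬝ᵥ d) * (d ⬝ᵥ x)) • d := by
    simp only [O, Matrix.sub_mulVec, Matrix.one_mulVec, Matrix.smul_mulVec,
      Matrix.vecMulVec_mulVec, op_smul_eq_smul, smul_smul]
  refine ⟨O, ?_, ?_, fun x hx => ?_⟩
  · have hsymm : Oᵀ = O := by
      simp only [O, Matrix.transpose_sub, Matrix.transpose_one, Matrix.transpose_smul,
        Matrix.transpose_vecMulVec]
    rw [Matrix.mem_orthogonalGroup_iff, hsymm]
    have hcancel : 2 / (d ⬝ᵥ d) * (2 / (d ⬝ᵥ d) * (d ⬝ᵥ d)) = 2 * (2 / (d ⬝ᵥ d)) := by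
      by_cases h0 : d ⬝ᵥ d = 0
      · simp [h0]
      · rw [div_mul_cancel₀ _ h0, mul_comm]
    refine Matrix.ext_of_mulVec_single fun i => ?_
    rw [← Matrix.mulVec_mulVec, Matrix.one_mulVec, hO, hO, dotProduct_sub, dotProduct_smul,
      smul_eq_mul]
    linear_combination (norm := module) ((d ⬝ᵥ Pi.single i 1) * hcancel) • d
  · by_cases h0 : d ⬝ᵥ d = 0
    · rw [hO, h0, div_zero, zero_mul, zero_smul, sub_zero, ← sub_eq_zero]
      exact hd ▸ dotProduct_self_eq_zero.1 h0
    · rw [hO, div_mul_eq_mul_div, ← hdd, div_self h0, one_smul, hd, sub_sub_cancel]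
  · have hdx : d ⬝ᵥ x = 0 := by rw [hd, sub_dotProduct, hx, sub_self]
    rw [hO, hdx, mul_zero, zero_smul, sub_zero]

/-- The null frame vectors of parameter `t` in the plane of the basis vectors labelled `z` and `o`,
completed by the remaining basis vectors. -/
def boostedNullFrame (z o : κ) (t : ℝ) (b : κ) : κ → ℝ :=
  if b = z then t • (Pi.single z 1 + Pi.single o 1)
  else if b = o then (2 * t)⁻¹ • (Pi.single o 1 - Pi.single z 1)
  else Pi.single b 1

lemma boostedNullFrame_dotProduct_minkowski_mulVec (hzo : o ≠ z) (t : ℝ) (a : κ) (w : κ → ℝ) :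
    boostedNullFrame z o t a ⬝ᵥ minkowski z *ᵥ w =
      if a = z then t * (w o - w z) else if a = o then (2 * t)⁻¹ * (w o + w z) else w a := by
  rw [dotProduct_minkowski_mulVec, boostedNullFrame]
  split_ifs with haz hao
  · simp only [smul_dotProduct, add_dotProduct, single_one_dotProduct, Pi.smul_apply, Pi.add_apply,
      Pi.single_eq_same, Pi.single_eq_of_ne hzo.symm, smul_eq_mul]
    ring
  · simp only [smul_dotProduct, sub_dotProduct, single_one_dotProduct, Pi.smul_apply, Pi.sub_apply,
      Pi.single_eq_same, Pi.single_eq_of_ne hzo.symm, smul_eq_mul]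
    ring
  · rw [single_one_dotProduct, Pi.single_eq_of_ne' haz, zero_mul, mul_zero, sub_zero]

lemma boostedNullFrame_gram (hzo : o ≠ z) {t : ℝ} (ht : t ≠ 0) (a b : κ) :
    boostedNullFrame z o t a ⬝ᵥ minkowski z *ᵥ boostedNullFrame z o t b =
      (Equiv.swap z o).permMatrix ℝ a b := by
  have hzt : t * ((2 * t)⁻¹ + (2 * t)⁻¹) = 1 := by field
  have hot : (2 * t)⁻¹ * (t + t) = 1 := by field
  rw [boostedNullFrame_dotProduct_minkowski_mulVec hzo, Equiv.Perm.permMatrix,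
    PEquiv.toMatrix_apply]
  rcases eq_or_ne a z with rfl | haz
  · rcases eq_or_ne b a with rfl | hba
    · simp [boostedNullFrame, hzo, hzo.symm]
    rcases eq_or_ne b o with rfl | hbo
    · simp [boostedNullFrame, hzo, hzo.symm, hzt, -mul_inv_rev]
    · simp [boostedNullFrame, hba, hbo, hba.symm, hbo.symm]
  rcases eq_or_ne a o with rfl | hao
  · rcases eq_or_ne b z with rfl | hbz
    · simp [boostedNullFrame, hzo, hzo.symm, hot, -mul_inv_rev]
    rcases eq_or_ne b a with rfl | hba
    · simp [boostedNullFrame, hzo, hzo.symm]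
    · simp [boostedNullFrame, hba, hbz, hba.symm, hbz.symm]
  rcases eq_or_ne b z with rfl | hbz
  · simp [boostedNullFrame, Equiv.swap_apply_of_ne_of_ne, haz, hao]
  rcases eq_or_ne b o with rfl | hbo
  · simp [boostedNullFrame, Equiv.swap_apply_of_ne_of_ne, haz, hao, hbz]
  · simp [boostedNullFrame, Equiv.swap_apply_of_ne_of_ne, Pi.single_apply, haz, hao, hbz, hbo]

theorem exists_nullFrame_matrix (hzo : o ≠ z) {k : κ → ℝ} (hk : k ≠ 0)
    (hnull : k ⬝ᵥ minkowski z *ᵥ k = 0) :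
    ∃ Q : Matrix κ κ ℝ, Qᵀ * minkowski z * Q = (Equiv.swap z o).permMatrix ℝ ∧
      Q.col z = k := by
  rw [dotProduct_minkowski_mulVec, sub_eq_zero] at hnull
  have ht : k z ≠ 0 := fun h => hk (dotProduct_self_eq_zero.1 (by rw [hnull, h]; ring))
  let w := (k z)⁻¹ • k - Pi.single z 1
  have hwz : w z = 0 := by simp [w, inv_mul_cancel₀ ht]
  have hww : w ⬝ᵥ w = 1 := by
    simp only [w, sub_dotProduct, dotProduct_sub, smul_dotProduct, dotProduct_smul, hnull,
      dotProduct_single, single_dotProduct, smul_eq_mul, Pi.sub_apply, Pi.smul_apply,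
      Pi.single_eq_same]
    field_simp
    norm_num
  obtain ⟨O, hO, hOw, hOfix⟩ := exists_orthogonal_mulVec_eq (v := Pi.single o 1) (w := w)
    (by simp [hww])
  have hOz : O *ᵥ Pi.single z 1 = Pi.single z 1 :=
    hOfix _ (by simp [hwz, hzo])
  have hOdot (x y : κ → ℝ) : (O *ᵥ x) ⬝ᵥ (O *ᵥ y) = x ⬝ᵥ y := by
    rw [Matrix.dotProduct_mulVec, ← Matrix.mulVec_transpose, Matrix.mulVec_mulVec,
      (Matrix.mem_orthogonalGroup_iff' _ _).1 hO, Matrix.one_mulVec]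
  have hOcoord (x : κ → ℝ) : (O *ᵥ x) z = x z := by
    simpa [hOz] using hOdot (Pi.single z 1) x
  have hOη (x y : κ → ℝ) : (O *ᵥ x) ⬝ᵥ minkowski z *ᵥ O *ᵥ y = x ⬝ᵥ minkowski z *ᵥ y := by
    simp only [dotProduct_minkowski_mulVec, hOdot, hOcoord]
  refine ⟨Matrix.of fun a b => (O *ᵥ boostedNullFrame z o (k z) b) a, ?_, ?_⟩
  · ext a b
    rw [Matrix.mul_assoc]
    exact (hOη _ _).trans (boostedNullFrame_gram hzo ht a b)
  · change O *ᵥ boostedNullFrame z o (k z) z = k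
    rw [boostedNullFrame, if_pos rfl, Matrix.mulVec_smul, Matrix.mulVec_add, hOz, hOw,
      add_sub_cancel, smul_inv_smul₀ ht]

end Minkowski

section TypeN

open Module
open scoped Matrix

variable {R V κ : Type*} [CommRing R] [AddCommGroup V] [Module R V] {p q : ℕ}
  [Fintype κ] [DecidableEq κ] (b b' : Basis κ R V) (B : LinearMap.BilinForm R V)

lemma completeContraction_components {J L : Type*} [Fintype J] [DecidableEq J] [Fintype L]
    (φ : V [⋀^Fin p]→ₗ[R] R) (e : L × Bool ≃ J × Fin p) :
    completeContraction (B.toMatrix b)⁻¹ (components b φ) e =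
      completeContraction (B.toMatrix b')⁻¹ (components b' φ) e := by
  rw [inv_toMatrix_eq_conj b b', completeContraction_conj, ← components_eq_vecMul]

lemma contractedSquare_components (φ : V [⋀^Fin (q + 1)]→ₗ[R] R) :
    contractedSquare (B.toMatrix b')⁻¹ (components b' φ) =
      (b.toMatrix b')ᵀ *
        contractedSquare (B.toMatrix b)⁻¹ (components b φ) * b.toMatrix b' := by
  rw [inv_toMatrix_eq_conj b b', components_eq_vecMul b b', contractedSquare_vecMul]

lemma contractedSquare_components_apply (φ : V [⋀^Fin (q + 1)]→ₗ[R] R) (i j : κ) :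
    contractedSquare (B.toMatrix b')⁻¹ (components b' φ) i j =
      b.repr (b' i) ⬝ᵥ contractedSquare (B.toMatrix b)⁻¹ (components b φ) *ᵥ b.repr (b' j) := by
  rw [contractedSquare_components b b', Matrix.mul_assoc]
  rfl

lemma inv_permMatrix_swap (z o : κ) :
    ((Equiv.swap z o).permMatrix R)⁻¹ = (Equiv.swap z o).permMatrix R := by
  refine Matrix.inv_eq_left_inv ?_
  rw [← Matrix.permMatrix_mul, Equiv.swap_mul_self, Matrix.permMatrix_one]

lemma apply_basis_eq_coord {B : LinearMap.BilinForm R V} {e : Basis κ R V} {σ : Equiv.Perm κ}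
    (he : B.toMatrix e = σ.permMatrix R) (i : κ) :
    B (e i) = e.coord (σ i) := by
  refine e.ext fun j => ?_
  rw [← LinearMap.BilinForm.toMatrix_apply, he]
  simp [PEquiv.toMatrix_apply, Finsupp.single_apply, eq_comm]

/-- The form `φ` is of type N with respect to the metric `B`: there is a nonzero null vector `ℓ`
whose interior product with `φ` vanishes, as does the exterior product of its metric dual
with `φ`. -/
def IsTypeNForm (B : LinearMap.BilinForm R V) (φ : V [⋀^Fin (q + 1)]→ₗ[R] R) : Prop :=
  ∃ ℓ ≠ 0, B ℓ ℓ = 0 ∧ φ.curryLeft ℓ = 0 ∧ covectorWedge (B ℓ) φ = 0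

lemma curryLeft_and_covectorWedge_eq_zero_iff [IsAddTorsionFree R] {z o : κ}
    {B : LinearMap.BilinForm R V} {e : Basis κ R V}
    (he : B.toMatrix e = (Equiv.swap z o).permMatrix R)
    (φ : V [⋀^Fin (q + 1)]→ₗ[R] R) :
    φ.curryLeft (e z) = 0 ∧ covectorWedge (B (e z)) φ = 0 ↔ IsTypeNArray z o (components e φ) := by
  rw [apply_basis_eq_coord he, Equiv.swap_apply_left, curryLeft_basis_eq_zero_iff,
    covectorWedge_coord_eq_zero_iff]
  exact ⟨fun h c hc => ⟨h.1 c hc, h.2 c hc⟩,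
    fun h => ⟨fun c hc => (h c hc).1, fun c hc => (h c hc).2⟩⟩

end TypeN

section LorentzianForm

open Module
open scoped Matrix

variable {V κ : Type*} [AddCommGroup V] [Module ℝ V] [Fintype κ] [DecidableEq κ] {z o : κ}
  {B : LinearMap.BilinForm ℝ V} {b : Basis κ ℝ V} {q : ℕ}

theorem exists_nullFrame (hb : B.toMatrix b = minkowski z) (hzo : o ≠ z)
    {ℓ : V} (hℓ : ℓ ≠ 0) (hnull : B ℓ ℓ = 0) :
    ∃ e : Basis κ ℝ V, B.toMatrix e = (Equiv.swap z o).permMatrix ℝ ∧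
      e z = ℓ := by
  rw [LinearMap.BilinForm.apply_eq_dotProduct_toMatrix_mulVec b, hb] at hnull
  obtain ⟨Q, hQ, hQz⟩ := exists_nullFrame_matrix hzo (by simpa using hℓ) hnull
  have hdet : IsUnit Q.det := by
    have hprod : (Qᵀ * minkowski z).det * Q.det = -1 := by
      rw [← Matrix.det_mul, hQ, Matrix.det_permutation, Equiv.Perm.sign_swap hzo.symm]
      simp
    exact isUnit_of_mul_isUnit_right (hprod ▸ isUnit_one.neg)
  obtain ⟨e, rfl⟩ := exists_basis_toMatrix_eq b hdet
  refine ⟨e, ?_, ?_⟩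
  · rw [← LinearMap.BilinForm.toMatrix_mul_basis_toMatrix b, hb, hQ]
  · exact b.repr.injective (DFunLike.coe_injective hQz)

lemma contractedSquare_apply_null_nonneg (hb : B.toMatrix b = minkowski z)
    (hzo : o ≠ z) (φ : V [⋀^Fin (q + 1)]→ₗ[ℝ] ℝ) {ℓ : V} (hℓ : B ℓ ℓ = 0) :
    0 ≤ b.repr ℓ ⬝ᵥ contractedSquare (minkowski z) (components b φ) *ᵥ b.repr ℓ := by
  rcases eq_or_ne ℓ 0 with rfl | hℓ0
  · simp
  obtain ⟨e, he, rfl⟩ := exists_nullFrame hb hzo hℓ0 hℓ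
  have h := contractedSquare_swap_diag_nonneg z o e φ
  rwa [← inv_permMatrix_swap, ← he, contractedSquare_components_apply b, hb, inv_minkowski] at h

theorem isTypeNForm_of_invariants_eq_zero (hb : B.toMatrix b = minkowski z)
    (hzo : o ≠ z) (φ : V [⋀^Fin (q + 1)]→ₗ[ℝ] ℝ)
    (hsq : sqNorm (minkowski z) (components b φ) = 0)
    (htr : (contractedSquare (minkowski z) (components b φ) * minkowski z *
      (contractedSquare (minkowski z) (components b φ) * minkowski z)).trace = 0) :
    IsTypeNForm B φ := by
  have : Nontrivial κ := ⟨o, z, hzo⟩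
  have hsymm : (minkowski z : Matrix κ κ ℝ).IsSymm := Matrix.diagonal_transpose _
  have hnull (ℓ : V) : b.repr ℓ ⬝ᵥ minkowski z *ᵥ b.repr ℓ = B ℓ ℓ := by
    rw [← hb, ← LinearMap.BilinForm.apply_eq_dotProduct_toMatrix_mulVec]
  obtain ⟨k, hk0, hk, hker⟩ := exists_null_mulVec_eq_zero (contractedSquare_isSymm hsymm _)
    (fun k hk => by
      obtain ⟨ℓ, rfl⟩ := b.equivFun.surjective k
      exact contractedSquare_apply_null_nonneg hb hzo φ ((hnull ℓ).symm.trans hk)) htr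
  obtain ⟨ℓ, rfl⟩ := b.equivFun.surjective k
  obtain ⟨e, he, rfl⟩ := exists_nullFrame hb hzo (by simpa using hk0) ((hnull ℓ).symm.trans hk)
  have hrow (i : κ) :
      contractedSquare ((Equiv.swap z o).permMatrix ℝ) (components e φ) i z = 0 := by
    rw [← inv_permMatrix_swap, ← he, contractedSquare_components_apply b, hb, inv_minkowski]
    exact (congrArg _ hker).trans (dotProduct_zero _)
  have hrow' : contractedSquare ((Equiv.swap z o).permMatrix ℝ) (components e φ) z o = 0 := by
    have hswap : ((Equiv.swap z o).permMatrix ℝ).IsSymm := by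
      rw [Matrix.IsSymm, Matrix.transpose_permMatrix, Equiv.swap_inv]
    rw [(contractedSquare_isSymm hswap _).apply, hrow]
  have hsq' : sqNorm ((Equiv.swap z o).permMatrix ℝ) (components e φ) = 0 := by
    rw [sqNorm_eq_completeContraction, ← inv_permMatrix_swap, ← he,
      completeContraction_components e b, hb, inv_minkowski, ← sqNorm_eq_completeContraction, hsq]
  have hN := isTypeNArray_components e φ
    (curryLeft_basis_eq_zero_of_contractedSquare e φ (hrow z) hrow') hsq'
  exact ⟨e z, e.ne_zero z, (hnull _).symm.trans hk,
    (curryLeft_and_covectorWedge_eq_zero_iff he φ).2 hN⟩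

lemma IsTypeNForm.completeContraction_eq_zero {φ : V [⋀^Fin (q + 1)]→ₗ[ℝ] ℝ}
    (hφ : IsTypeNForm B φ) (hb : B.toMatrix b = minkowski z) (hzo : o ≠ z) (b' : Basis κ ℝ V)
    {J L : Type*} [Fintype J] [DecidableEq J] [Nonempty J] [Fintype L]
    (e : L × Bool ≃ J × Fin (q + 1)) :
    completeContraction (B.toMatrix b')⁻¹ (components b' φ) e = 0 := by
  obtain ⟨ℓ, hℓ0, hnull, hℓ⟩ := hφ
  obtain ⟨f, hf, rfl⟩ := exists_nullFrame hb hzo hℓ0 hnull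
  rw [completeContraction_components b' f, hf, inv_permMatrix_swap]
  exact completeContraction_swap_eq_zero ((curryLeft_and_covectorWedge_eq_zero_iff hf φ).1 hℓ) e

theorem isTypeNForm_tfae (hb : B.toMatrix b = minkowski z) (hzo : o ≠ z)
    (b' : Basis κ ℝ V) (φ : V [⋀^Fin (q + 1)]→ₗ[ℝ] ℝ) :
    List.TFAE [
      ∀ (J L : Type) [Fintype J] [DecidableEq J] [Nonempty J] [Fintype L]
        (e : L × Bool ≃ J × Fin (q + 1)),
        completeContraction (B.toMatrix b')⁻¹ (components b' φ) e = 0,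
      sqNorm (B.toMatrix b')⁻¹ (components b' φ) = 0 ∧
        (contractedSquare (B.toMatrix b')⁻¹ (components b' φ) * (B.toMatrix b')⁻¹ *
          (contractedSquare (B.toMatrix b')⁻¹ (components b' φ) * (B.toMatrix b')⁻¹)).trace = 0,
      IsTypeNForm B φ] := by
  tfae_have 1 → 2 := fun h => by
    rw [sqNorm_eq_completeContraction, trace_contractedSquare_mul_self_eq_completeContraction]
    exact ⟨h _ _ _, h _ _ _⟩
  tfae_have 2 → 3
  | ⟨hsq, htr⟩ => by
    rw [sqNorm_eq_completeContraction, completeContraction_components b' b, hb, inv_minkowski,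
      ← sqNorm_eq_completeContraction] at hsq
    rw [trace_contractedSquare_mul_self_eq_completeContraction,
      completeContraction_components b' b, hb, inv_minkowski,
      ← trace_contractedSquare_mul_self_eq_completeContraction] at htr
    exact isTypeNForm_of_invariants_eq_zero hb hzo φ hsq htr
  tfae_have 3 → 1 := fun h J L _ _ _ _ e => h.completeContraction_eq_zero hb hzo b' e
  tfae_finish

end LorentzianForm

section Schemes

lemma completeContraction_congr {R κ J J' L L' : Type*} [CommSemiring R] [Fintype κ]
    [Fintype J] [Fintype J'] [DecidableEq J] [DecidableEq J'] [Fintype L] [Fintype L'] {p : ℕ}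
    (eJ : J ≃ J') (eL : L' ≃ L) (H : Matrix κ κ R) (f : (Fin p → κ) → R)
    (e : L × Bool ≃ J × Fin p) :
    completeContraction H f (((eL.prodCongr (Equiv.refl Bool)).trans e).trans
      (eJ.prodCongr (Equiv.refl (Fin p)))) = completeContraction H f e := by
  rw [completeContraction, ← ((eJ.prodCongr (Equiv.refl (Fin p))).arrowCongr
    (Equiv.refl κ)).sum_comp]
  refine Finset.sum_congr rfl fun φ _ => ?_
  congr 1
  · rw [← eL.prod_comp]
    simp [Prod.map_apply']
  · rw [← eJ.prod_comp]
    simp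

variable {n p N m : ℕ}

/-- The concomitant scheme without derivatives and free indices that contracts `N` copies of a
tensor of rank `p` according to `e`. -/
def ConcomScheme.ofPattern (hN : 0 < N) (e : Fin m × Bool ≃ Fin N × Fin p) : ConcomScheme p 0 where
  N := N
  hN := hN
  ord := fun _ => 0
  m := m
  slots := (Equiv.sumEmpty _ _).trans (e.trans (Equiv.sigmaEquivProd _ _).symm)

lemma ConcomScheme.exists_eq_ofPattern (S : ConcomScheme p 0) (hS : ∀ j, S.ord j = 0) :
    ∃ e : Fin S.m × Bool ≃ Fin S.N × Fin p, S = ofPattern S.hN e := by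
  obtain ⟨N, hN, ord, m, slots⟩ := S
  obtain rfl : ord = fun _ => 0 := funext hS
  refine ⟨(Equiv.sumEmpty _ _).symm.trans (slots.trans (Equiv.sigmaEquivProd _ _)), ?_⟩
  exact congrArg _ (Equiv.ext fun y => ((Equiv.sumEmpty _ _).symm_apply_apply y).symm ▸ rfl)

lemma ConcomScheme.value_ofPattern (hN : 0 < N) (e : Fin m × Bool ≃ Fin N × Fin p)
    (g : MetricField n) (F : TensorField n p) (x : Pt n) (v : Fin 0 → Fin n) :
    (ofPattern hN e).value g F x v = completeContraction (g x)⁻¹ (F x) e := by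
  rw [completeContraction, ← (e.arrowCongr (Equiv.refl (Fin n))).sum_comp]
  refine Finset.sum_congr rfl fun φ _ => ?_
  congr 1
  refine Finset.prod_congr rfl fun i _ => ?_
  exact congrArg₂ (fun y y' => (g x)⁻¹ (φ y) (φ y')) (e.symm_apply_apply _).symm
    (e.symm_apply_apply _).symm

lemma isVSI0At_iff_completeContraction_eq_zero (g : MetricField n) (F : TensorField n p)
    (x : Pt n) :
    IsVSI0At g F x ↔ ∀ (J L : Type) [Fintype J] [DecidableEq J] [Nonempty J] [Fintype L]
      (e : L × Bool ≃ J × Fin p), completeContraction (g x)⁻¹ (F x) e = 0 := by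
  constructor
  · intro h J L _ _ _ _ e
    rw [← completeContraction_congr (Fintype.equivFin J) (Fintype.equivFin L).symm,
      ← ConcomScheme.value_ofPattern Fintype.card_pos _ g F x Fin.elim0]
    exact h _ (fun _ => rfl) _
  · intro h S hS v
    obtain ⟨e, he⟩ := S.exists_eq_ofPattern hS
    have := Fin.pos_iff_nonempty.1 S.hN
    rw [he, ConcomScheme.value_ofPattern, h]

end Schemes

section Coordinates

open Module
open scoped Matrix

variable {n p q : ℕ}

/-- The metric `g` has Lorentzian signature `(-,+,…,+)` at the point `x`. -/
def IsLorentzAt (g : MetricField n) (x : Pt n) : Prop :=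
  ∃ P : Matrix (Fin n) (Fin n) ℝ, IsUnit P.det ∧
    Pᵀ * g x * P = Matrix.diagonal fun i : Fin n => if (i : ℕ) = 0 then (-1 : ℝ) else 1

lemma IsLorentzAt.exists_orthonormal_basis {g : MetricField n} {x : Pt n} (hg : IsLorentzAt g x)
    {z : Fin n} (hz : (z : ℕ) = 0) :
    ∃ b : Basis (Fin n) ℝ (Fin n → ℝ),
      (Matrix.toBilin' (g x)).toMatrix b = minkowski z := by
  obtain ⟨P, hP, hPg⟩ := hg
  obtain ⟨b, rfl⟩ := exists_basis_toMatrix_eq (Pi.basisFun ℝ (Fin n)) hP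
  refine ⟨b, ?_⟩
  rw [← LinearMap.BilinForm.toMatrix_mul_basis_toMatrix (Pi.basisFun ℝ (Fin n)),
    LinearMap.BilinForm.toMatrix_basisFun, LinearMap.BilinForm.toMatrix'_toBilin', hPg, minkowski]
  simp only [Fin.ext_iff, hz]

lemma gdot_eq_toBilin' (g : MetricField n) (x : Pt n) (X Y : Fin n → ℝ) :
    gdot g x X Y = Matrix.toBilin' (g x) X Y := by
  simp only [gdot, Matrix.toBilin'_apply, mul_comm (X _)]

lemma isTypeNForm_toBilin'_iff {g : MetricField n} {x : Pt n} (hg : (g x).IsSymm)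
    {φ : (Fin n → ℝ) [⋀^Fin (q + 1)]→ₗ[ℝ] ℝ} {f : (Fin (q + 1) → Fin n) → ℝ}
    (hf : components (Pi.basisFun ℝ (Fin n)) φ = f) :
    IsTypeNForm (Matrix.toBilin' (g x)) φ ↔ ∃ ℓ : Fin n → ℝ, ℓ ≠ 0 ∧ gdot g x ℓ ℓ = 0 ∧
      (∀ v : Fin (q + 1) → Fin n, (∑ a, ℓ a * f (Function.update v 0 a)) = 0) ∧
      ∀ idx : Fin (q + 2) → Fin n,
        (∑ σ : Equiv.Perm (Fin (q + 2)), ((Equiv.Perm.sign σ : ℤ) : ℝ) *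
          ((∑ b, g x (idx (σ 0)) b * ℓ b) * f fun m => idx (σ m.succ))) = 0 := by
  have hlower (ℓ : Fin n → ℝ) (i : Fin n) :
      Matrix.toBilin' (g x) ℓ (Pi.basisFun ℝ (Fin n) i) = ∑ b, g x i b * ℓ b := by
    simp only [Matrix.toBilin'_apply', Pi.basisFun_apply, Matrix.mulVec_single_one, dotProduct,
      Matrix.col_apply, hg.apply, mul_comm]
  simp only [IsTypeNForm, curryLeft_eq_zero_iff (Pi.basisFun ℝ (Fin n)),
    covectorWedge_eq_zero_iff (Pi.basisFun ℝ (Fin n)), hlower, Pi.basisFun_repr, hf,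
    gdot_eq_toBilin']

theorem vsi0_iff_typeN_general (hn : 2 ≤ n) {g : MetricField n} {F : TensorField n (q + 1)}
    {x : Pt n} (hg : IsLorentzAt g x)
    (hF : ∀ (idx : Fin (q + 1) → Fin n) (σ : Equiv.Perm (Fin (q + 1))),
      F x (idx ∘ σ) = ((Equiv.Perm.sign σ : ℤ) : ℝ) * F x idx) :
    List.TFAE [
      IsVSI0At g F x,
      sqNorm (g x)⁻¹ (F x) = 0 ∧ (contractedSquare (g x)⁻¹ (F x) * (g x)⁻¹ *
        (contractedSquare (g x)⁻¹ (F x) * (g x)⁻¹)).trace = 0,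
      ∃ ℓ : Fin n → ℝ, ℓ ≠ 0 ∧ gdot g x ℓ ℓ = 0 ∧
        (∀ v : Fin (q + 1) → Fin n, (∑ a, ℓ a * F x (Function.update v 0 a)) = 0) ∧
        ∀ idx : Fin (q + 2) → Fin n,
          (∑ σ : Equiv.Perm (Fin (q + 2)), ((Equiv.Perm.sign σ : ℤ) : ℝ) *
            ((∑ b, g x (idx (σ 0)) b * ℓ b) * F x fun m => idx (σ m.succ))) = 0] := by
  obtain ⟨b, hb⟩ := hg.exists_orthonormal_basis (z := ⟨0, by omega⟩) rfl
  obtain ⟨φ, hφ⟩ := exists_components_eq (Pi.basisFun ℝ (Fin n)) hF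
  have hsymm : (g x).IsSymm := by
    rw [← Matrix.isSymm_toBilin'_iff_isSymm,
      ← LinearMap.BilinForm.isSymm_toMatrix_iff_isSymm b, hb]
    exact Matrix.isSymm_diagonal _
  rw [isVSI0At_iff_completeContraction_eq_zero, ← isTypeNForm_toBilin'_iff hsymm hφ]
  have h := isTypeNForm_tfae hb (o := ⟨1, hn⟩) (by simp) (Pi.basisFun ℝ (Fin n)) φ
  rwa [hφ, LinearMap.BilinForm.toMatrix_basisFun, LinearMap.BilinForm.toMatrix'_toBilin'] at h

end Coordinates

/-- a `p`-form at a point of a Lorentzian spacetime is VSI₀ (all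
zeroth-order scalar polynomial invariants vanish) iff it is of type N there. -/
theorem vsi0_iff_typeN {n p : ℕ} [NeZero n] [NeZero p] (hn : 2 ≤ n)
    (g : MetricField n) (hg : IsLorentzMetric g) (F : TensorField n p)
    (hF : ∀ (x : Pt n) (idx : Fin p → Fin n) (σ : Equiv.Perm (Fin p)),
      F x (idx ∘ σ) = ((Equiv.Perm.sign σ : ℤ) : ℝ) * F x idx)
    (x : Pt n) :
    IsVSI0At g F x ↔
      ∃ ℓ : Fin n → ℝ, ℓ ≠ 0 ∧ gdot g x ℓ ℓ = 0 ∧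
        (∀ v : Fin p → Fin n, (∑ a, ℓ a * F x (Function.update v 0 a)) = 0) ∧
        (∀ idx : Fin (p+1) → Fin n,
          (∑ σ : Equiv.Perm (Fin (p+1)), ((Equiv.Perm.sign σ : ℤ) : ℝ) *
            ((∑ b, g x (idx (σ 0)) b * ℓ b) * F x fun m => idx (σ m.succ))) = 0) := by
  obtain ⟨q, rfl⟩ := Nat.exists_eq_succ_of_ne_zero (NeZero.ne p)
  exact (vsi0_iff_typeN_general hn (hg.2.2 x) (hF x)).out 0 2

end VSI
end
end

section
/- For a VSI p-form F = (1/(p−1)!) f_{α₁…α_{p−1}}(u,x) du ∧ dx^{α₁} ∧ … ∧ dx^{α_{p−1}} on a degenerate Kundt background ds² = 2 du [dr + H du + W_α dx^α] + g_{αβ}(u,x) dx^α dx^β, the source-free Maxwell equations dF = 0 and d*F = 0 are equivalent to f_{[α₂…α_{p−1},α₁]} = 0 and (√(g̃) f^{β α₁…α_{p−2}})_{,β} = 0, where g̃ = det g_{αβ}; i.e., the (p−1)-form f must be harmonic (closed and co-closed, possibly depending on u as a parameter) in the (n−2)-dimensional Riemannian transverse geometry g_{αβ}(u,x). -/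
open scoped BigOperators

noncomputable section

namespace VSI

/-!
Write `F = du ∧ f`. Since `f` is transverse and independent of `r`, `dF = -du ∧ df` vanishes
exactly when the transverse components of `df` do.

For `d*F`, the functions `H` and `W` enter only the `r`-row and `r`-column of the inverse metric,
and raising turns `du` into `∂_r`; hence the density `√|g| F^♯` equals `∂_r ∧ S`, where
`S = √g̃ f^♯` is raised by the transverse metric alone. Contracting the density with the Levi-Civita
symbol gives `*F`, and antisymmetrizing over `n + 1` indices shows that `d*F` is, up to a nonzero
factor, the contraction of the divergence of the density. Finally `div (∂_r ∧ S) = -∂_r ∧ div S`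
because `S` does not depend on `r`, and `div S = 0` is co-closedness of `f`.
-/

open Equiv.Perm (sign decomposeFin)

/-- Total antisymmetry of the components `t` of a tensor at a point. `IsAlternating T` unfolds to
`∀ x, IsSkew (T x)`. -/
def IsSkew {α : Type*} {k : ℕ} (t : (Fin k → α) → ℝ) : Prop :=
  ∀ (idx : Fin k → α) (σ : Equiv.Perm (Fin k)), t (idx ∘ σ) = ((sign σ : ℤ) : ℝ) * t idx

/-- The antisymmetrization of `φ` over all choices of its first argument, for `φ` skew in the
remaining ones: `extD`, `duWedge` and the wedge product with a covector have this form. -/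
def skewSum {α : Type*} {k : ℕ} (φ : α → (Fin k → α) → ℝ) (idx : Fin (k + 1) → α) : ℝ :=
  ∑ m : Fin (k + 1), (-1 : ℝ) ^ (m : ℕ) * φ (idx m) (m.removeNth idx)

/-- The wedge product of the `i`-th basis vector with `t`. It serves both as `dx^i ∧ t` for lower
and as `∂_i ∧ t` for upper indices. -/
def coordWedge {α : Type*} [DecidableEq α] {k : ℕ} (i : α) (t : (Fin k → α) → ℝ) :
    (Fin (k + 1) → α) → ℝ :=
  skewSum fun b c => (if b = i then 1 else 0) * t c

section Skew

variable {α : Type*} {k : ℕ}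

lemma cons_comp_decomposeFin_symm (b : α) (c : Fin k → α) (ρ : Equiv.Perm (Fin k)) :
    (Fin.cons b c : Fin (k + 1) → α) ∘ decomposeFin.symm (0, ρ) = Fin.cons b (c ∘ ρ) := by
  ext i
  cases i using Fin.cases <;> simp

lemma cast_sign_cycleRange (m : Fin k) :
    ((sign m.cycleRange : ℤ) : ℝ) = (-1) ^ (m : ℕ) := by
  simp [Fin.sign_cycleRange]

lemma exists_perm_apply_succAbove (σ : Equiv.Perm (Fin (k + 1))) (m : Fin (k + 1)) :
    ∃ ρ : Equiv.Perm (Fin k),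
      (-1 : ℝ) ^ (m : ℕ) * ((sign ρ : ℤ) : ℝ) = ((sign σ : ℤ) : ℝ) * (-1) ^ (σ m : ℕ) ∧
      ∀ j, σ (m.succAbove j) = (σ m).succAbove (ρ j) := by
  obtain ⟨⟨p, ρ⟩, hρ⟩ := decomposeFin.symm.surjective ((σ m).cycleRange * σ * m.cycleRange⁻¹)
  have hp : p = 0 := by
    rw [← Equiv.Perm.decomposeFin_symm_apply_zero p ρ, hρ]
    simp [Equiv.Perm.inv_def]
  subst hp
  have hsign : sign ρ = sign (σ m).cycleRange * sign σ * sign m.cycleRange := by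
    simpa using congrArg sign hρ
  refine ⟨ρ, ?_, fun j => ?_⟩
  · rw [hsign]
    push_cast
    rw [cast_sign_cycleRange, cast_sign_cycleRange]
    linear_combination ((-1) ^ (σ m : ℕ) * ((sign σ : ℤ) : ℝ)) *
      (Even.neg_one_pow ⟨(m : ℕ), rfl⟩ : (-1 : ℝ) ^ ((m : ℕ) + m) = 1)
  · have hj := congrArg (· j.succ) hρ
    rw [← (σ m).cycleRange.apply_eq_iff_eq]
    simpa [Equiv.Perm.inv_def] using hj.symm

lemma isSkew_zero : IsSkew fun _ : Fin k → α => (0 : ℝ) := fun _ _ => (mul_zero _).symm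

lemma IsSkew.const_mul {t : (Fin k → α) → ℝ} (ht : IsSkew t) (z : ℝ) :
    IsSkew fun idx => z * t idx := fun idx σ => by
  simp only [ht idx σ, mul_left_comm]

lemma IsSkew.neg {t : (Fin k → α) → ℝ} (ht : IsSkew t) : IsSkew fun idx => -t idx :=
  fun idx σ => by simp only [ht idx σ, mul_neg]

lemma IsSkew.sum {ι : Type*} {s : Finset ι} {t : ι → (Fin k → α) → ℝ}
    (ht : ∀ i, IsSkew (t i)) : IsSkew fun idx => ∑ i ∈ s, t i idx := fun idx σ => by
  simp only [ht _ idx σ, Finset.mul_sum]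

lemma IsSkew.eq_zero_of_not_injective {t : (Fin k → α) → ℝ} (ht : IsSkew t) {idx : Fin k → α}
    (hidx : ¬ Function.Injective idx) : t idx = 0 := by
  obtain ⟨i, j, hij, hne⟩ := Function.not_injective_iff.1 hidx
  have hswap : idx ∘ Equiv.swap i j = idx := by
    rw [Equiv.comp_swap_eq_update, hij, Function.update_eq_self, ← hij, Function.update_eq_self]
  have := ht idx (Equiv.swap i j)
  rw [hswap, Equiv.Perm.sign_swap hne] at this
  push_cast at this
  linarith

lemma IsSkew.cons {t : (Fin (k + 1) → α) → ℝ} (ht : IsSkew t) (b : α) :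
    IsSkew fun c : Fin k → α => t (Fin.cons b c) := fun c σ => by
  simp only [← cons_comp_decomposeFin_symm, ht (Fin.cons b c)]
  simp

lemma IsSkew.insertNth {t : (Fin (k + 1) → α) → ℝ} (ht : IsSkew t) (m : Fin (k + 1)) (b : α)
    (c : Fin k → α) : t (m.insertNth b c) = (-1) ^ (m : ℕ) * t (Fin.cons b c) := by
  rw [← Fin.cons_comp_cycleRange, ht, cast_sign_cycleRange]

lemma isSkew_skewSum {φ : α → (Fin k → α) → ℝ} (hφ : ∀ b, IsSkew (φ b)) :
    IsSkew (skewSum φ) := fun idx σ => by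
  rw [skewSum, skewSum, Finset.mul_sum]
  refine Fintype.sum_equiv σ _ _ fun m => ?_
  obtain ⟨ρ, hsign, hρ⟩ := exists_perm_apply_succAbove σ m
  have hrem : m.removeNth (idx ∘ σ) = (σ m).removeNth idx ∘ ρ :=
    funext fun j => congrArg idx (hρ j)
  rw [hrem, hφ, ← mul_assoc, hsign, mul_assoc, Function.comp_apply]

lemma skewSum_cons (φ : α → (Fin (k + 1) → α) → ℝ) (b : α) (v : Fin (k + 1) → α) :
    skewSum φ (Fin.cons b v) = φ b v - skewSum (fun b' c => φ b' (Fin.cons b c)) v := by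
  have hrem : ∀ m : Fin (k + 1), m.succ.removeNth (Fin.cons b v : Fin (k + 2) → α) =
      Fin.cons b (m.removeNth v) := fun m => by
    ext i
    cases i using Fin.cases <;> simp [Fin.removeNth_apply]
  rw [skewSum, Fin.sum_univ_succ, skewSum, sub_eq_add_neg, ← Finset.sum_neg_distrib]
  congr 1
  · simp
  · refine Finset.sum_congr rfl fun m _ => ?_
    rw [hrem, Fin.cons_succ, Fin.val_succ, pow_succ]
    ring

lemma IsSkew.ext_of_cons {t t' : (Fin (k + 1) → α) → ℝ} (ht : IsSkew t) (ht' : IsSkew t') (i : α)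
    (havoid : ∀ idx, (∀ m, idx m ≠ i) → t idx = t' idx)
    (hcons : ∀ v : Fin k → α, (∀ m, v m ≠ i) → t (Fin.cons i v) = t' (Fin.cons i v)) : t = t' := by
  ext idx
  by_cases hinj : Function.Injective idx
  · by_cases hi : ∃ m, idx m = i
    · obtain ⟨m, rfl⟩ := hi
      have := hcons (m.removeNth idx) fun j h => Fin.succAbove_ne m j (hinj h)
      rw [← m.insertNth_self_removeNth idx, ht.insertNth, ht'.insertNth, this]
    · exact havoid idx (not_exists.1 hi)
  · rw [ht.eq_zero_of_not_injective hinj, ht'.eq_zero_of_not_injective hinj]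

end Skew

section CoordWedge

variable {α : Type*} [DecidableEq α] {k : ℕ} {i : α} {t : (Fin k → α) → ℝ}

lemma IsSkew.coordWedge (ht : IsSkew t) (i : α) : IsSkew (coordWedge i t) :=
  isSkew_skewSum fun _ => ht.const_mul _

lemma coordWedge_of_forall_ne {idx : Fin (k + 1) → α} (hidx : ∀ m, idx m ≠ i) :
    coordWedge i t idx = 0 := by
  simp [coordWedge, skewSum, hidx]

lemma coordWedge_cons {v : Fin k → α} (hv : ∀ m, v m ≠ i) :
    coordWedge i t (Fin.cons i v) = t v := by
  rw [coordWedge, skewSum, Fin.sum_univ_succ]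
  simp [hv]

lemma coordWedge_eq_zero_iff (ht : IsSkew t) :
    (∀ idx, coordWedge i t idx = 0) ↔ ∀ v, (∀ m, v m ≠ i) → t v = 0 := by
  refine ⟨fun h v hv => by rw [← coordWedge_cons (t := t) hv, h], fun h => congrFun ?_⟩
  refine (ht.coordWedge i).ext_of_cons isSkew_zero i (fun _ => coordWedge_of_forall_ne) ?_
  exact fun v hv => by rw [coordWedge_cons hv, h v hv]

end CoordWedge

section PermSign

variable {k : ℕ}

lemma permSign_ne_zero_iff {w : Fin k → Fin k} : permSign w ≠ 0 ↔ Function.Injective w := by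
  rw [permSign, Finite.injective_iff_bijective]
  split_ifs with h <;> simp only [h, ne_eq, Units.ne_zero, not_false_eq_true, not_true]

lemma isSkew_permSign : IsSkew fun w : Fin k → Fin k => ((permSign w : ℤ) : ℝ) := fun w σ => by
  by_cases h : Function.Bijective w
  · have hσ : Equiv.ofBijective (w ∘ σ) (h.comp σ.bijective) = Equiv.ofBijective w h * σ := by
      ext; rfl
    simp only [permSign, dif_pos h, dif_pos (h.comp σ.bijective), hσ, Equiv.Perm.sign_mul]
    push_cast
    ring
  · have hσ : ¬ Function.Bijective (w ∘ σ) := by rwa [σ.bijective.of_comp_iff]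
    simp only [permSign, dif_neg h, dif_neg hσ, Int.cast_zero, mul_zero]

lemma skewSum_permSign (φ : Fin k → ℝ) (w : Fin (k + 1) → Fin k) :
    skewSum (fun b c => φ b * ((permSign c : ℤ) : ℝ)) w = 0 :=
  (isSkew_skewSum fun _ => isSkew_permSign.const_mul _).eq_zero_of_not_injective
    (Fintype.not_injective_of_card_lt w (by simp))

end PermSign

section Append

variable {α : Type*} {p q : ℕ}

lemma val_succAbove (j : Fin (p + 1)) (i : Fin p) :
    (j.succAbove i : ℕ) = if (i : ℕ) < j then (i : ℕ) else i + 1 := by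
  rw [Fin.succAbove, apply_ite Fin.val]
  rfl

lemma removeNth_natAdd_append (a : Fin p → α) (b : Fin (q + 1) → α) (j : Fin (q + 1)) :
    (Fin.natAdd p j).removeNth (Fin.append (n := q + 1) a b) =
      Fin.append a (j.removeNth b) := by
  ext i
  induction i using Fin.addCases with
  | left i =>
    have : (Fin.natAdd p j : Fin (p + q + 1)).succAbove (Fin.castAdd q i) =
        Fin.castAdd (q + 1) i := by
      ext; grind [val_succAbove]
    simp [Fin.removeNth_apply, this]
  | right i =>
    have : (Fin.natAdd p j : Fin (p + q + 1)).succAbove (Fin.natAdd p i) =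
        Fin.natAdd p (j.succAbove i) := by
      ext
      rw [val_succAbove, Fin.val_natAdd, Fin.val_natAdd, Fin.val_natAdd, val_succAbove]
      split_ifs <;> omega
    simp [Fin.removeNth_apply, this]

lemma removeNth_castAdd_append (h : p + (q + 1) = p + 1 + q) (a : Fin (p + 1) → α)
    (b : Fin (q + 1) → α) (j : Fin (p + 1)) :
    (Fin.castAdd (q + 1) j).removeNth (Fin.append (n := q + 1) a b) =
      fun i => Fin.append (j.removeNth a) b (Fin.cast h.symm i) := by
  ext i
  obtain ⟨i, rfl⟩ := (finCongr h).surjective i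
  induction i using Fin.addCases with
  | left i =>
    have : (Fin.castAdd (q + 1) j : Fin (p + 1 + q + 1)).succAbove
        (Fin.cast h (Fin.castAdd (q + 1) i)) = Fin.castAdd (q + 1) (j.succAbove i) := by
      ext; grind [val_succAbove]
    simp [Fin.removeNth_apply, this]
  | right i =>
    have : (Fin.castAdd (q + 1) j : Fin (p + 1 + q + 1)).succAbove
        (Fin.cast h (Fin.natAdd p i)) = Fin.natAdd (p + 1) i := by
      ext; grind [val_succAbove]
    simp [Fin.removeNth_apply, this]

end Append

/-- The Levi-Civita symbol with its `n` indices split into two groups. -/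
def leviCivita {n p q : ℕ} (h : p + q = n) (a : Fin p → Fin n) (idx : Fin q → Fin n) : ℝ :=
  ((permSign fun i => Fin.append a idx (Fin.cast h.symm i) : ℤ) : ℝ)

section LeviCivita

variable {n p q : ℕ}

lemma leviCivita_ne_zero_iff (h : p + q = n) {a : Fin p → Fin n} {idx : Fin q → Fin n} :
    leviCivita h a idx ≠ 0 ↔
      Function.Injective a ∧ Function.Injective idx ∧ ∀ i j, a i ≠ idx j := by
  subst h
  rw [leviCivita, Int.cast_ne_zero, permSign_ne_zero_iff]
  exact Fin.append_injective_iff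

lemma isSkew_leviCivita (h : p + q = n) (idx : Fin q → Fin n) :
    IsSkew fun a : Fin p → Fin n => leviCivita h a idx := fun a σ => by
  subst h
  have happ : Fin.append (a ∘ σ) idx =
      Fin.append a idx ∘ finSumFinEquiv.permCongr (Equiv.Perm.sumCongr σ 1) := by
    ext i
    induction i using Fin.addCases <;> simp [Equiv.permCongr_apply]
  have hsign := isSkew_permSign (Fin.append a idx)
    (finSumFinEquiv.permCongr (Equiv.Perm.sumCongr σ 1))
  rw [Equiv.Perm.sign_permCongr, Equiv.Perm.sign_sumCongr, ← happ] at hsign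
  simpa [leviCivita] using hsign

lemma exists_leviCivita_ne_zero (h : p + q = n) {a : Fin p → Fin n} (ha : Function.Injective a) :
    ∃ idx : Fin q → Fin n, leviCivita h a idx ≠ 0 := by
  have hcard : (Finset.univ.image a)ᶜ.card = q := by
    rw [Finset.card_compl, Finset.card_image_of_injective _ ha, Fintype.card_fin,
      Finset.card_univ, Fintype.card_fin]
    omega
  refine ⟨(Finset.univ.image a)ᶜ.orderEmbOfFin hcard, (leviCivita_ne_zero_iff h).2
    ⟨ha, ((Finset.univ.image a)ᶜ.orderEmbOfFin hcard).injective, fun i j hij => ?_⟩⟩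
  have hmem := Finset.orderEmbOfFin_mem (Finset.univ.image a)ᶜ hcard j
  rw [← hij] at hmem
  simp at hmem

lemma range_eq_compl_of_leviCivita_ne_zero (h : p + q = n) {a : Fin p → Fin n}
    {idx : Fin q → Fin n} (ha : leviCivita h a idx ≠ 0) : Set.range a = (Set.range idx)ᶜ := by
  subst h
  have hinj : Function.Injective (Fin.append a idx) :=
    Fin.append_injective_iff.2 ((leviCivita_ne_zero_iff rfl).1 ha)
  have hdisj := ((leviCivita_ne_zero_iff rfl).1 ha).2.2
  refine Set.Subset.antisymm ?_ fun b hb => ?_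
  · rintro _ ⟨i, rfl⟩ ⟨j, hj⟩
    exact hdisj i j hj.symm
  · obtain ⟨m, rfl⟩ := Finite.surjective_of_injective hinj b
    induction m using Fin.addCases with
    | left i => exact ⟨i, (Fin.append_left a idx i).symm⟩
    | right j => exact absurd ⟨j, (Fin.append_right a idx j).symm⟩ hb

lemma exists_perm_of_leviCivita_ne_zero (h : p + q = n) {a b : Fin p → Fin n} {idx : Fin q → Fin n}
    (ha : leviCivita h a idx ≠ 0) (hb : leviCivita h b idx ≠ 0) :
    ∃ σ : Equiv.Perm (Fin p), b = a ∘ σ := by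
  have hrange : Set.range b = Set.range a := by
    rw [range_eq_compl_of_leviCivita_ne_zero h ha, range_eq_compl_of_leviCivita_ne_zero h hb]
  have ha_inj := ((leviCivita_ne_zero_iff h).1 ha).1
  have hb_inj := ((leviCivita_ne_zero_iff h).1 hb).1
  refine ⟨(Equiv.ofInjective b hb_inj).trans
    ((Equiv.setCongr hrange).trans (Equiv.ofInjective a ha_inj).symm), funext fun i => ?_⟩
  simp [Equiv.apply_ofInjective_symm]

lemma eq_zero_of_sum_mul_leviCivita_eq_zero (h : p + q = n) {d : (Fin p → Fin n) → ℝ}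
    (hd : IsSkew d) (hzero : ∀ idx : Fin q → Fin n, ∑ a, d a * leviCivita h a idx = 0)
    (a : Fin p → Fin n) : d a = 0 := by
  by_cases ha : Function.Injective a
  swap
  · exact hd.eq_zero_of_not_injective ha
  obtain ⟨idx, hidx⟩ := exists_leviCivita_ne_zero h ha
  have hterm : ∀ b, 0 ≤ d b * leviCivita h b idx * (d a * leviCivita h a idx) := fun b => by
    by_cases hb : leviCivita h b idx = 0
    · simp [hb]
    obtain ⟨σ, rfl⟩ := exists_perm_of_leviCivita_ne_zero h hidx hb
    rw [hd, show leviCivita h (a ∘ σ) idx = _ from isSkew_leviCivita h idx a σ]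
    calc (0 : ℝ) ≤ (((sign σ : ℤ) : ℝ) * (d a * leviCivita h a idx)) ^ 2 := sq_nonneg _
      _ = _ := by ring
  have hsum : ∑ b, d b * leviCivita h b idx * (d a * leviCivita h a idx) = 0 := by
    rw [← Finset.sum_mul, hzero, zero_mul]
  have hsq := (Finset.sum_eq_zero_iff_of_nonneg fun b _ => hterm b).1 hsum a (Finset.mem_univ a)
  exact (mul_eq_zero.1 (mul_self_eq_zero.1 hsq)).resolve_right hidx

lemma skewSum_leviCivita_add (h₁ : p + 1 + q = n) (h₂ : p + (q + 1) = n) (φ : Fin n → ℝ)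
    (a : Fin (p + 1) → Fin n) (idx : Fin (q + 1) → Fin n) :
    skewSum (fun b c => φ b * leviCivita h₂ c idx) a +
      (-1) ^ (p + 1) * skewSum (fun b c => φ b * leviCivita h₁ a c) idx = 0 := by
  subst h₁
  rw [← skewSum_permSign φ (Fin.append (n := q + 1) a idx)]
  simp only [skewSum]
  refine Eq.trans ?_ (Fin.sum_univ_add (a := p + 1) (b := q + 1) _).symm
  rw [Finset.mul_sum]
  congr 1
  · refine Finset.sum_congr rfl fun j _ => ?_
    rw [removeNth_castAdd_append h₂, Fin.append_left, Fin.val_castAdd, leviCivita]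
  · refine Finset.sum_congr rfl fun j _ => ?_
    rw [removeNth_natAdd_append, Fin.append_right, Fin.val_natAdd, ← mul_assoc, ← pow_add]
    rfl

lemma sum_skewSum_mul (D : Fin n → (Fin (p + 1) → Fin n) → ℝ) (hD : ∀ b, IsSkew (D b))
    (E : (Fin p → Fin n) → ℝ) :
    ∑ a, skewSum (fun b c => D b a * E c) a = (p + 1) * ∑ c, (∑ b, D b (Fin.cons b c)) * E c := by
  have hpos : ∀ m : Fin (p + 1), ∑ a : Fin (p + 1) → Fin n,
      (-1 : ℝ) ^ (m : ℕ) * (D (a m) a * E (m.removeNth a)) =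
        ∑ c, (∑ b, D b (Fin.cons b c)) * E c := fun m => by
    rw [← (Fin.insertNthEquiv (fun _ => Fin n) m).sum_comp, Fintype.sum_prod_type_right]
    refine Finset.sum_congr rfl fun c _ => ?_
    rw [Finset.sum_mul]
    refine Finset.sum_congr rfl fun b _ => ?_
    simp only [Fin.insertNthEquiv, Equiv.coe_fn_mk]
    rw [Fin.insertNth_apply_same, Fin.removeNth_insertNth,
      (hD b).insertNth, mul_assoc, ← mul_assoc, ← pow_add, Even.neg_one_pow ⟨(m : ℕ), rfl⟩, one_mul]
  simp only [skewSum]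
  rw [Finset.sum_comm, Finset.sum_congr rfl fun m _ => hpos m]
  simp

end LeviCivita

section PartialDerivative

variable {n : ℕ}

lemma pd_const_mul (z : ℝ) (F : Pt n → ℝ) (a : Fin n) (x : Pt n) :
    pd (fun y => z * F y) a x = z * pd F a x := by
  rw [pd, show (fun y => z * F y) = z • F from rfl, fderiv_const_smul_field]
  rfl

lemma pd_zero (a : Fin n) (x : Pt n) : pd (fun _ => (0 : ℝ)) a x = 0 := by
  simp [pd]

lemma pd_sum {ι : Type*} {s : Finset ι} {F : ι → Pt n → ℝ} (hF : ∀ i, Differentiable ℝ (F i))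
    (a : Fin n) (x : Pt n) : pd (fun y => ∑ i ∈ s, F i y) a x = ∑ i ∈ s, pd (F i) a x := by
  simp [pd, fderiv_fun_sum fun i _ => hF i x]

lemma pd_eq_zero_of_indepOfR {F : Pt n → ℝ} (hF : IndepOfR F) {r : Fin n} (hr : (r : ℕ) = 1)
    (x : Pt n) : pd F r x = 0 := by
  by_cases hdiff : DifferentiableAt ℝ F x
  · have hconst : ∀ t : ℝ, F (x + t • Pi.single r 1) = F x := fun t => hF _ _ fun i hi => by
      have hir : i ≠ r := fun h => hi (h ▸ hr)
      simp [hir]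
    rw [pd, ← hdiff.lineDeriv_eq_fderiv, lineDeriv]
    simp only [hconst, deriv_const]
  · rw [pd, fderiv_zero_of_not_differentiableAt hdiff]
    rfl

lemma isSkew_pd {k : ℕ} {T : TensorField n k} (hT : IsAlternating T) (a : Fin n) (x : Pt n) :
    IsSkew fun c => pd (fun y => T y c) a x := fun c σ => by
  simp only [hT _ c σ, pd_const_mul]

lemma isSkew_extD {k : ℕ} {T : TensorField n k} (hT : IsAlternating T) (x : Pt n) :
    IsSkew (extD T x) :=
  isSkew_skewSum fun b => isSkew_pd hT b x

end PartialDerivative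

/-- The divergence of an antisymmetric tensor density with upper indices,
`(div T)^{c…} = T^{b c…}_{,b}`. -/
def divergence {n k : ℕ} (T : TensorField n (k + 1)) : TensorField n k := fun x c =>
  ∑ b, pd (fun y => T y (Fin.cons b c)) b x

/-- The contraction of the upper indices of a tensor density with the Levi-Civita symbol. -/
def dual {n p q : ℕ} (h : p + q = n) (T : TensorField n p) : TensorField n q := fun x idx =>
  ∑ a, T x a * leviCivita h a idx

/-- The tensor density `√|g| T^{c…}` of a covariant tensor `T`. -/
def raisedDensity {n k : ℕ} (g : MetricField n) (T : TensorField n k) : TensorField n k :=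
  fun x c => √|(g x).det| * raiseAll g T x c

section Hodge

variable {n k s : ℕ}

lemma isSkew_raiseAll (g : MetricField n) (T : TensorField n k) (x : Pt n) (hT : IsSkew (T x)) :
    IsSkew (raiseAll g T x) := fun c σ => by
  simp only [raiseAll]
  rw [← (σ.arrowCongr (Equiv.refl (Fin n))).symm.sum_comp, Finset.mul_sum]
  refine Finset.sum_congr rfl fun j _ => ?_
  have hj : (σ.arrowCongr (Equiv.refl (Fin n))).symm j = j ∘ σ := by
    ext; simp [Equiv.arrowCongr]
  rw [hj, hT, mul_left_comm]
  simp only [Function.comp_apply]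
  rw [Equiv.prod_comp σ fun m => (g x)⁻¹ (c m) (j m)]

lemma isAlternating_raisedDensity (g : MetricField n) {T : TensorField n k}
    (hT : IsAlternating T) : IsAlternating (raisedDensity g T) := fun x =>
  (isSkew_raiseAll g T x (hT x)).const_mul _

lemma extD_const_mul (z : ℝ) (T : TensorField n k) (x : Pt n) (idx : Fin (k + 1) → Fin n) :
    extD (fun y c => z * T y c) x idx = z * extD T x idx := by
  simp only [extD, pd_const_mul, Finset.mul_sum, mul_left_comm]

lemma hodge_eq_dual {p : ℕ} (h : p + s = n) (g : MetricField n) (F : TensorField n p) :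
    hodge h g F = fun x idx => (1 / (p.factorial : ℝ)) * dual h (raisedDensity g F) x idx := by
  ext x idx
  simp only [hodge, dual, raisedDensity, leviCivita]
  congr 1
  exact Finset.sum_congr rfl fun a _ => by ring

lemma extD_dual (h₁ : k + 1 + s = n) (h₂ : k + (s + 1) = n) {T : TensorField n (k + 1)}
    (hT : IsAlternating T) (hdiff : ∀ c, Differentiable ℝ fun y => T y c) (x : Pt n)
    (idx : Fin (s + 1) → Fin n) :
    extD (dual h₁ T) x idx = (-1) ^ k * (k + 1) * dual h₂ (divergence T) x idx := by
  have hpd : ∀ b c, pd (fun y => dual h₁ T y c) b x =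
      ∑ a, pd (fun y => T y a) b x * leviCivita h₁ a c := fun b c => by
    simp only [dual, mul_comm _ (leviCivita h₁ _ c)]
    rw [pd_sum fun a => (hdiff a).const_mul _]
    simp only [pd_const_mul]
  have hschouten : ∀ a : Fin (k + 1) → Fin n,
      skewSum (fun b c => pd (fun y => T y a) b x * leviCivita h₁ a c) idx =
        (-1) ^ k * skewSum (fun b c => pd (fun y => T y a) b x * leviCivita h₂ c idx) a := by
    intro a
    have h := skewSum_leviCivita_add h₁ h₂ (fun b => pd (fun y => T y a) b x) a idx
    have hk : (-1 : ℝ) ^ k * (-1) ^ k = 1 := by rw [← pow_add, Even.neg_one_pow ⟨k, rfl⟩]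
    rw [pow_succ] at h
    linear_combination (-(-1 : ℝ) ^ k) * h - hk *
      skewSum (fun b c => pd (fun y => T y a) b x * leviCivita h₁ a c) idx
  calc extD (dual h₁ T) x idx
      = ∑ a, skewSum (fun b c => pd (fun y => T y a) b x * leviCivita h₁ a c) idx := by
        simp only [extD, skewSum]
        rw [Finset.sum_comm]
        refine Finset.sum_congr rfl fun m _ => ?_
        rw [hpd, Finset.mul_sum]
        rfl
    _ = (-1) ^ k * ∑ a,
          skewSum (fun b c => pd (fun y => T y a) b x * leviCivita h₂ c idx) a := by
        rw [Finset.mul_sum, Finset.sum_congr rfl fun a _ => hschouten a]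
    _ = (-1) ^ k * (k + 1) * dual h₂ (divergence T) x idx := by
        rw [sum_skewSum_mul _ (fun b => isSkew_pd hT b x), ← mul_assoc]
        rfl

lemma isSkew_divergence {T : TensorField n (k + 1)} (hT : IsAlternating T) (x : Pt n) :
    IsSkew (divergence T x) :=
  IsSkew.sum fun b => (isSkew_pd hT b x).cons b

lemma extD_hodge_eq_zero_iff (h : k + 1 + s = n) {g : MetricField n} {F : TensorField n (k + 1)}
    (hF : IsAlternating F) (hdiff : ∀ c, Differentiable ℝ fun y => raisedDensity g F y c) :
    (∀ x idx, extD (hodge h g F) x idx = 0) ↔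
      ∀ x c, divergence (raisedDensity g F) x c = 0 := by
  have hdens := isAlternating_raisedDensity g hF
  have hfact : (1 / ((k + 1).factorial : ℝ)) ≠ 0 := by positivity
  have hcoef : (-1 : ℝ) ^ k * (k + 1) ≠ 0 := mul_ne_zero (by simp) (by positivity)
  have h₂ : k + (s + 1) = n := by omega
  simp only [hodge_eq_dual, extD_const_mul, extD_dual h h₂ hdens hdiff, mul_eq_zero, hfact, hcoef,
    false_or]
  exact ⟨fun hzero x => eq_zero_of_sum_mul_leviCivita_eq_zero h₂ (isSkew_divergence hdens x)
    (hzero x), fun hzero x idx => by simp [dual, hzero]⟩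

end Hodge

lemma skewSum_coordWedge {α : Type*} [DecidableEq α] {k : ℕ} (i : α)
    {φ : α → (Fin k → α) → ℝ} (hφ : ∀ b, IsSkew (φ b)) :
    skewSum (fun b => coordWedge i (φ b)) = fun idx => -coordWedge i (skewSum φ) idx := by
  refine (isSkew_skewSum fun b => (hφ b).coordWedge i).ext_of_cons
    ((isSkew_skewSum hφ).coordWedge i).neg i (fun idx hidx => ?_) fun v hv => ?_
  · rw [coordWedge_of_forall_ne hidx, neg_zero]
    exact Finset.sum_eq_zero fun m _ =>
      mul_eq_zero_of_right _ (coordWedge_of_forall_ne fun _ => hidx _)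
  · rw [skewSum_cons, coordWedge_of_forall_ne hv, coordWedge_cons hv, zero_sub]
    exact congrArg Neg.neg (Finset.sum_congr rfl fun m _ =>
      congrArg _ (coordWedge_cons fun _ => hv _))

section CoordWedgeDerivative

variable {n k : ℕ}

lemma differentiable_coordWedge (i : Fin n) {T : TensorField n k}
    (hT : ∀ c, Differentiable ℝ fun y => T y c) (idx : Fin (k + 1) → Fin n) :
    Differentiable ℝ fun y => coordWedge i (T y) idx := by
  simp only [coordWedge, skewSum]
  exact Differentiable.fun_sum fun _ _ => ((hT _).const_mul _).const_mul _

lemma pd_coordWedge (i : Fin n) {T : TensorField n k} (hT : ∀ c, Differentiable ℝ fun y => T y c)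
    (idx : Fin (k + 1) → Fin n) (a : Fin n) (x : Pt n) :
    pd (fun y => coordWedge i (T y) idx) a x =
      coordWedge i (fun c => pd (fun y => T y c) a x) idx := by
  simp only [coordWedge, skewSum]
  rw [pd_sum fun m => ((hT _).const_mul _).const_mul _]
  simp only [pd_const_mul]

lemma extD_coordWedge (i : Fin n) {T : TensorField n k} (hT : IsAlternating T)
    (hdiff : ∀ c, Differentiable ℝ fun y => T y c) (x : Pt n) (idx : Fin (k + 2) → Fin n) :
    extD (fun y => coordWedge i (T y)) x idx = -coordWedge i (extD T x) idx := by
  rw [show extD T x = skewSum fun b c => pd (fun y => T y c) b x from rfl,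
    ← congrFun (skewSum_coordWedge i fun b => isSkew_pd hT b x) idx]
  exact Finset.sum_congr rfl fun m _ => by rw [pd_coordWedge i hdiff]; rfl

lemma divergence_coordWedge (i : Fin n) {T : TensorField n (k + 1)}
    (hdiff : ∀ c, Differentiable ℝ fun y => T y c) (x : Pt n) (c : Fin (k + 1) → Fin n) :
    divergence (fun y => coordWedge i (T y)) x c =
      pd (fun y => T y c) i x - coordWedge i (divergence T x) c := by
  have hcomm : coordWedge i (divergence T x) c =
      ∑ b, coordWedge i (fun d => pd (fun y => T y (Fin.cons b d)) b x) c := by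
    simp only [coordWedge, skewSum, divergence, Finset.mul_sum]
    exact Finset.sum_comm
  simp only [divergence, pd_coordWedge i hdiff, hcomm]
  simp only [coordWedge, skewSum_cons, Finset.sum_sub_distrib, ite_mul, one_mul, zero_mul,
    Finset.sum_ite_eq', Finset.mem_univ, if_true]

end CoordWedgeDerivative

/-- The components of `t` along `u` (index `0`) and `r` (index `1`) vanish. -/
def IsTransverse {n k : ℕ} (t : (Fin k → Fin n) → ℝ) : Prop :=
  ∀ v : Fin k → Fin n, (∃ i, (v i : ℕ) < 2) → t v = 0

section Transverse

variable {n q : ℕ} {f : TensorField n q} {u r : Fin n}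

lemma duWedge_eq_coordWedge (hu : (u : ℕ) = 0) (f : TensorField n q) :
    duWedge f = fun x => coordWedge u (f x) := by
  ext x idx
  simp only [duWedge, coordWedge, skewSum, mul_assoc, Fin.ext_iff, hu]
  rfl

lemma isAlternating_duWedge (hu : (u : ℕ) = 0) (hf : IsAlternating f) :
    IsAlternating (duWedge f) := by
  rw [duWedge_eq_coordWedge hu]
  exact fun x => IsSkew.coordWedge (hf x) u

lemma extD_eq_zero_of_mem_range (hr : (r : ℕ) = 1) (hf_tr : ∀ x, IsTransverse (f x))
    (hf_r : IndepOfR f) (x : Pt n) {v : Fin (q + 1) → Fin n} (hv : r ∈ Set.range v) :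
    extD f x v = 0 := by
  obtain ⟨j, hj⟩ := hv
  refine Finset.sum_eq_zero fun m _ => ?_
  rcases eq_or_ne j m with rfl | hjm
  · rw [hj, pd_eq_zero_of_indepOfR (fun y z h => by rw [hf_r y z h]) hr, mul_zero]
  · obtain ⟨i, rfl⟩ := Fin.exists_succAbove_eq hjm
    have hzero : ∀ y, f y (fun i => v (m.succAbove i)) = 0 := fun y =>
      hf_tr y _ ⟨i, by rw [hj, hr]; norm_num⟩
    simp only [hzero, pd_zero, mul_zero]

lemma extD_duWedge_eq_zero_iff (hu : (u : ℕ) = 0) (hr : (r : ℕ) = 1)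
    (hf : ∀ c, Differentiable ℝ fun y => f y c) (hf_alt : IsAlternating f)
    (hf_tr : ∀ x, IsTransverse (f x)) (hf_r : IndepOfR f) :
    (∀ x idx, extD (duWedge f) x idx = 0) ↔ TransClosed f := by
  simp only [duWedge_eq_coordWedge hu, extD_coordWedge u hf_alt hf, neg_eq_zero,
    coordWedge_eq_zero_iff (isSkew_extD hf_alt _)]
  refine forall_congr' fun x => ⟨fun h v hv => h v fun m hm => ?_, fun h v hv => ?_⟩
  · have := hv m
    rw [hm, hu] at this
    omega
  · by_cases hvr : r ∈ Set.range v
    · exact extD_eq_zero_of_mem_range hr hf_tr hf_r x hvr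
    · refine h v fun m => ?_
      have hmu : (v m : ℕ) ≠ 0 := fun h0 => hv m (Fin.ext (h0.trans hu.symm))
      have hmr : (v m : ℕ) ≠ 1 := fun h1 => hvr ⟨m, Fin.ext (h1.trans hr.symm)⟩
      omega

lemma divergence_eq_zero_of_lt_two {T : TensorField n (q + 1)} (hT : ∀ x, IsTransverse (T x))
    (x : Pt n) {c : Fin q → Fin n} {m : Fin q} (hm : (c m : ℕ) < 2) : divergence T x c = 0 := by
  have hzero : ∀ b y, T y (Fin.cons b c) = 0 := fun b y => hT y _ ⟨m.succ, hm⟩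
  simp only [divergence, hzero, pd_zero, Finset.sum_const_zero]

lemma divergence_coordWedge_eq_zero_iff (hr : (r : ℕ) = 1) {T : TensorField n (q + 1)}
    (hdiff : ∀ c, Differentiable ℝ fun y => T y c) (hT : IsAlternating T)
    (hT_tr : ∀ x, IsTransverse (T x)) (hT_r : IndepOfR T) :
    (∀ x c, divergence (fun y => coordWedge r (T y)) x c = 0) ↔
      ∀ x c, divergence T x c = 0 := by
  have hpd : ∀ c x, pd (fun y => T y c) r x = 0 := fun c =>
    pd_eq_zero_of_indepOfR (fun y z h => by rw [hT_r y z h]) hr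
  simp only [divergence_coordWedge r hdiff, hpd, zero_sub, neg_eq_zero,
    coordWedge_eq_zero_iff (isSkew_divergence hT _)]
  refine forall_congr' fun x => ⟨fun h c => ?_, fun h c _ => h c⟩
  by_cases hc : ∃ m, c m = r
  · obtain ⟨m, hm⟩ := hc
    exact divergence_eq_zero_of_lt_two hT_tr x (m := m) (by rw [hm, hr]; norm_num)
  · exact h c (not_exists.1 hc)

lemma transCoclosed_iff {hT : MetricField n} (hdet : ∀ x, 0 < (hT x).det)
    (f : TensorField n (q + 1)) :
    TransCoclosed hT f ↔ ∀ x c, divergence (raisedDensity hT f) x c = 0 := by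
  have habs : ∀ y, |(hT y).det| = (hT y).det := fun y => abs_of_pos (hdet y)
  refine forall_congr' fun x => ?_
  simp only [divergence, raisedDensity, habs]
  refine ⟨fun h c => ?_, fun h v => ?_⟩
  · rcases isEmpty_or_nonempty (Fin n) with _ | ⟨⟨b⟩⟩
    · simp
    · simpa only [Fin.update_cons_zero] using h (Fin.cons b c)
  · rw [← Fin.cons_self_tail v]
    simpa only [Fin.update_cons_zero] using h (Fin.tail v)

end Transverse

section RankOneUpdate

variable {m R : Type*} [Fintype m] [DecidableEq m] [CommRing R] {v w : m → R}

lemma det_one_add_vecMulVec (h : v ⬝ᵥ w = 0) : (1 + Matrix.vecMulVec w v).det = 1 := by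
  rw [Matrix.vecMulVec_eq Unit, Matrix.det_one_add_replicateCol_mul_replicateRow, h, add_zero]

lemma inv_one_add_vecMulVec (h : v ⬝ᵥ w = 0) :
    (1 + Matrix.vecMulVec w v)⁻¹ = 1 - Matrix.vecMulVec w v := by
  refine Matrix.inv_eq_right_inv ?_
  rw [add_mul, mul_sub, mul_sub, Matrix.vecMulVec_mul_vecMulVec, h]
  simp

lemma one_add_vecMulVec_single_mul_apply (u : m) (w : m → R) (M : Matrix m m R) (i j : m) :
    ((1 + Matrix.vecMulVec w (Pi.single u 1)) * M) i j = M i j + w i * M u j := by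
  rw [add_mul, Matrix.vecMulVec_mul, Matrix.add_apply]
  simp [Matrix.vecMulVec_apply]

lemma mul_one_add_vecMulVec_single_apply (r : m) (v : m → R) (M : Matrix m m R) (i j : m) :
    (M * (1 + Matrix.vecMulVec (Pi.single r 1) v)) i j = M i j + M i r * v j := by
  rw [mul_add, Matrix.mul_vecMulVec, Matrix.add_apply]
  simp [Matrix.vecMulVec_apply]

end RankOneUpdate

/-- The `n × n` matrix `h` encodes a metric on the transverse directions, being the identity in
the rows and columns of `u` and `r`. -/
def IsPadded {n : ℕ} (h : Matrix (Fin n) (Fin n) ℝ) : Prop :=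
  ∀ a b : Fin n, ((a : ℕ) < 2 ∨ (b : ℕ) < 2) → h a b = if a = b then 1 else 0

lemma IsPadded.inv {n : ℕ} {h : Matrix (Fin n) (Fin n) ℝ} (hp : IsPadded h) (hd : IsUnit h.det) :
    IsPadded h⁻¹ := by
  have hcol : ∀ {h : Matrix (Fin n) (Fin n) ℝ}, IsPadded h → IsUnit h.det →
      ∀ a b : Fin n, (b : ℕ) < 2 → h⁻¹ a b = if a = b then 1 else 0 := by
    intro h hp hd a b hb
    have hfix : h.mulVec (Pi.single b 1) = Pi.single b 1 := by
      ext c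
      simp [hp c b (Or.inr hb), Pi.single_apply]
    let _ := h.invertibleOfIsUnitDet hd
    simpa [Pi.single_apply] using congrFun (Matrix.inv_mulVec_eq_vec hfix.symm) a
  rintro a b (ha | hb)
  · have hpT : IsPadded h.transpose := fun a b hab => by
      rw [Matrix.transpose_apply, hp b a hab.symm]
      simp only [eq_comm]
    have := hcol hpT (by rwa [Matrix.det_transpose]) b a ha
    rw [← Matrix.transpose_nonsing_inv, Matrix.transpose_apply] at this
    simpa only [eq_comm] using this
  · exact hcol hp hd a b hb

section Kundt

variable {n : ℕ} {u r : Fin n} {H : Pt n → ℝ} {W : Pt n → Fin n → ℝ} {hT : MetricField n}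
  {x : Pt n}

/- Once its `u`- and `r`-rows are swapped, the metric is `hT` between two unipotent factors, so its
determinant and inverse can be read off. -/
lemma exists_kundtMetric_eq_mul (hu : (u : ℕ) = 0) (hr : (r : ℕ) = 1) (hp : IsPadded (hT x)) :
    ∃ a b : Fin n → ℝ, a r = 0 ∧ b u = 0 ∧
      (kundtMetric H W hT x).submatrix (Equiv.swap u r) id =
        (1 + Matrix.vecMulVec b (Pi.single u 1)) * hT x *
          (1 + Matrix.vecMulVec (Pi.single r 1) a) := by
  have hur : u ≠ r := fun h => by rw [h, hr] at hu; omega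
  refine ⟨fun j => if j = u then 2 * H x else if j = r then 0 else W x j,
    fun i => if i = u ∨ i = r then 0 else W x i, by simp [hur.symm], by simp, ?_⟩
  have hval_u : ∀ i : Fin n, (i : ℕ) = 0 ↔ i = u := fun i => by rw [Fin.ext_iff, hu]
  have hval_r : ∀ i : Fin n, (i : ℕ) = 1 ↔ i = r := fun i => by rw [Fin.ext_iff, hr]
  have hrow_u := fun j => hp u j (Or.inl (by omega))
  have hrow_r := fun j => hp r j (Or.inl (by omega))
  have hcol_u := fun i => hp i u (Or.inr (by omega))
  have hcol_r := fun i => hp i r (Or.inr (by omega))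
  ext i j
  rw [mul_one_add_vecMulVec_single_apply, one_add_vecMulVec_single_mul_apply,
    one_add_vecMulVec_single_mul_apply]
  simp only [kundtMetric, Matrix.submatrix_apply, Matrix.of_apply, hval_u, hval_r, id]
  by_cases hiu : i = u <;> by_cases hir : i = r <;> by_cases hju : j = u <;>
    by_cases hjr : j = r <;> subst_vars <;>
    simp_all [Equiv.swap_apply_of_ne_of_ne, eq_comm]

lemma det_kundtMetric (hu : (u : ℕ) = 0) (hr : (r : ℕ) = 1) (hp : IsPadded (hT x)) :
    (kundtMetric H W hT x).det = -(hT x).det := by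
  obtain ⟨a, b, ha, hb, hfactor⟩ := exists_kundtMetric_eq_mul (H := H) (W := W) hu hr hp
  have hur : u ≠ r := fun h => by rw [h, hr] at hu; omega
  have := congrArg Matrix.det hfactor
  rw [Matrix.det_mul, Matrix.det_mul, det_one_add_vecMulVec (by simpa using hb),
    det_one_add_vecMulVec (by simpa using ha), Matrix.det_permute, Equiv.Perm.sign_swap hur] at this
  push_cast at this
  linarith

lemma inv_kundtMetric_apply_of_ne (hu : (u : ℕ) = 0) (hr : (r : ℕ) = 1) (hp : IsPadded (hT x))
    {a b : Fin n} (ha : a ≠ r) (hb : 2 ≤ (b : ℕ)) :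
    (kundtMetric H W hT x)⁻¹ a b = (hT x)⁻¹ a b := by
  obtain ⟨v, w, hv, hw, hfactor⟩ := exists_kundtMetric_eq_mul (H := H) (W := W) hu hr hp
  have hinv := congrArg (·⁻¹) hfactor
  have hswap : Equiv.swap u r b = b :=
    Equiv.swap_apply_of_ne_of_ne (fun h => by omega) fun h => by omega
  have hbu : b ≠ u := fun h => by omega
  change (Matrix.submatrix _ _ (Equiv.refl _))⁻¹ = _ at hinv
  rw [Matrix.inv_submatrix_equiv, Matrix.mul_inv_rev, Matrix.mul_inv_rev,
    inv_one_add_vecMulVec (by simpa using hv), inv_one_add_vecMulVec (by simpa using hw)] at hinv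
  have := congrFun (congrFun hinv a) b
  rw [sub_mul, mul_sub, Matrix.vecMulVec_mul, Matrix.mul_vecMulVec] at this
  simpa [Matrix.vecMulVec_apply, hswap, ha, hbu] using this

lemma inv_kundtMetric_apply_u (hu : (u : ℕ) = 0) (hr : (r : ℕ) = 1) (hp : IsPadded (hT x))
    (hd : IsUnit (hT x).det) (a : Fin n) :
    (kundtMetric H W hT x)⁻¹ a u = if a = r then 1 else 0 := by
  have hcol : (kundtMetric H W hT x).mulVec (Pi.single r 1) = Pi.single u 1 := by
    ext c
    by_cases hc : (c : ℕ) = 0 <;> simp [kundtMetric, hr, Pi.single_apply, Fin.ext_iff, hu, hc]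
  let _ := (kundtMetric H W hT x).invertibleOfIsUnitDet (by
    rw [det_kundtMetric hu hr hp]
    exact hd.neg)
  simpa [Pi.single_apply] using congrFun (Matrix.inv_mulVec_eq_vec hcol.symm) a

lemma raiseAll_coordWedge {k : ℕ} (g : MetricField n) (i : Fin n) (T : TensorField n k) :
    raiseAll g (fun y => coordWedge i (T y)) x =
      skewSum fun b c => (g x)⁻¹ b i * raiseAll g T x c := by
  ext idx
  simp only [raiseAll, coordWedge, skewSum, Finset.mul_sum]
  rw [Finset.sum_comm]
  refine Finset.sum_congr rfl fun m _ => ?_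
  rw [← (Fin.insertNthEquiv (fun _ => Fin n) m).sum_comp, Fintype.sum_prod_type_right]
  refine Finset.sum_congr rfl fun c _ => ?_
  simp only [Fin.insertNthEquiv, Equiv.coe_fn_mk, Fin.insertNth_apply_same,
    Fin.removeNth_insertNth, Fin.prod_univ_succAbove _ m, Fin.insertNth_apply_succAbove]
  rw [Finset.sum_eq_single i (fun b _ hb => by simp [hb]) (by simp), if_pos rfl]
  simp only [Fin.removeNth_apply]
  ring

variable {q : ℕ} {f : TensorField n q}

lemma raiseAll_kundtMetric (hu : (u : ℕ) = 0) (hr : (r : ℕ) = 1) (hp : IsPadded (hT x))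
    (hf_tr : IsTransverse (f x)) {c : Fin q → Fin n} (hc : ∀ m, c m ≠ r) :
    raiseAll (kundtMetric H W hT) f x c = raiseAll hT f x c := by
  refine Finset.sum_congr rfl fun j _ => ?_
  by_cases hj : ∃ m, (j m : ℕ) < 2
  · rw [hf_tr j hj, mul_zero, mul_zero]
  · push Not at hj
    rw [Finset.prod_congr rfl fun m _ => inv_kundtMetric_apply_of_ne hu hr hp (hc m) (hj m)]

lemma raiseAll_kundtMetric_duWedge (hu : (u : ℕ) = 0) (hr : (r : ℕ) = 1) (hp : IsPadded (hT x))
    (hd : IsUnit (hT x).det) (hf_alt : IsSkew (f x)) (hf_tr : IsTransverse (f x)) :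
    raiseAll (kundtMetric H W hT) (duWedge f) x = coordWedge r (raiseAll hT f x) := by
  rw [duWedge_eq_coordWedge hu, raiseAll_coordWedge]
  simp only [inv_kundtMetric_apply_u hu hr hp hd]
  refine ((isSkew_raiseAll _ f x hf_alt).coordWedge r).ext_of_cons
    ((isSkew_raiseAll hT f x hf_alt).coordWedge r) r (fun idx hidx => ?_) fun v hv => ?_
  · exact (coordWedge_of_forall_ne hidx).trans (coordWedge_of_forall_ne hidx).symm
  · exact ((coordWedge_cons hv).trans (raiseAll_kundtMetric hu hr hp hf_tr hv)).trans
      (coordWedge_cons hv).symm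

lemma raisedDensity_kundtMetric_duWedge (hu : (u : ℕ) = 0) (hr : (r : ℕ) = 1)
    (hp : IsPadded (hT x)) (hd : IsUnit (hT x).det) (hf_alt : IsSkew (f x))
    (hf_tr : IsTransverse (f x)) :
    raisedDensity (kundtMetric H W hT) (duWedge f) x = coordWedge r (raisedDensity hT f x) := by
  ext idx
  rw [raisedDensity, det_kundtMetric hu hr hp, abs_neg,
    raiseAll_kundtMetric_duWedge hu hr hp hd hf_alt hf_tr]
  simp only [coordWedge, skewSum, raisedDensity, Finset.mul_sum]
  exact Finset.sum_congr rfl fun m _ => by ring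

lemma isTransverse_raiseAll (hp : IsPadded (hT x)) (hd : IsUnit (hT x).det)
    (hf_tr : IsTransverse (f x)) : IsTransverse (raiseAll hT f x) := by
  rintro v ⟨m, hm⟩
  refine Finset.sum_eq_zero fun j _ => ?_
  by_cases hj : (j m : ℕ) < 2
  · rw [hf_tr j ⟨m, hj⟩, mul_zero]
  · have hne : v m ≠ j m := fun h => hj (h ▸ hm)
    rw [Finset.prod_eq_zero (Finset.mem_univ m), zero_mul]
    rw [hp.inv hd _ _ (Or.inl hm), if_neg hne]

end Kundt

section Regularity

variable {E : Type*} [NormedAddCommGroup E] [NormedSpace ℝ E]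

lemma differentiable_finsetProd {ι : Type*} {s : Finset ι} {F : ι → E → ℝ}
    (hF : ∀ i, Differentiable ℝ (F i)) : Differentiable ℝ fun y => ∏ i ∈ s, F i y := by
  classical exact fun y =>
    (HasFDerivAt.finsetProd fun i _ => (hF i y).hasFDerivAt).differentiableAt

lemma differentiable_det {m : Type*} [Fintype m] [DecidableEq m] {M : E → Matrix m m ℝ}
    (hM : ∀ a b, Differentiable ℝ fun y => M y a b) : Differentiable ℝ fun y => (M y).det := by
  simp only [Matrix.det_apply']
  exact Differentiable.fun_sum fun σ _ =>
    (differentiable_finsetProd fun i => hM (σ i) i).const_mul _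

lemma differentiable_inv_apply {m : Type*} [Fintype m] [DecidableEq m] {M : E → Matrix m m ℝ}
    (hM : ∀ a b, Differentiable ℝ fun y => M y a b) (hdet : ∀ y, (M y).det ≠ 0) (a b : m) :
    Differentiable ℝ fun y => (M y)⁻¹ a b := by
  simp only [Matrix.inv_def, Matrix.smul_apply, Matrix.adjugate_apply, Ring.inverse_eq_inv',
    smul_eq_mul]
  refine ((differentiable_det hM).inv hdet).mul (differentiable_det fun c d => ?_)
  by_cases hc : c = b
  · simp [hc]
  · simpa [Matrix.updateRow_ne hc] using hM c d

variable {n k : ℕ} {g : MetricField n} {T : TensorField n k}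

lemma differentiable_raisedDensity (hg : ∀ a b, Differentiable ℝ fun y => g y a b)
    (hdet : ∀ y, (g y).det ≠ 0) (hT : ∀ c, Differentiable ℝ fun y => T y c)
    (c : Fin k → Fin n) : Differentiable ℝ fun y => raisedDensity g T y c := by
  have hsqrt : Differentiable ℝ fun y => √|(g y).det| := fun y =>
    (((differentiable_det hg) y).abs (hdet y)).sqrt (abs_ne_zero.2 (hdet y))
  refine hsqrt.mul (Differentiable.fun_sum fun j _ => ?_)
  exact (differentiable_finsetProd fun i => differentiable_inv_apply hg hdet _ _).mul (hT j)

lemma indepOfR_raisedDensity (hg : IndepOfR g) (hT : IndepOfR T) :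
    IndepOfR (raisedDensity g T) := fun x y hxy => by
  ext c
  simp only [raisedDensity, raiseAll, hg x y hxy, hT x y hxy]

end Regularity

theorem maxwell_reduces_to_transverse_general {n q s : ℕ} [NeZero q] (hn : (q + 1) + s = n)
    (H : Pt n → ℝ) (W : Pt n → Fin n → ℝ) {hT : MetricField n} (hpad : ∀ x, IsPadded (hT x))
    (hdiff : ∀ a b, Differentiable ℝ fun x => hT x a b) (hindep : IndepOfR hT)
    (hdet : ∀ x, 0 < (hT x).det) {f : TensorField n q}
    (hf : ∀ c, Differentiable ℝ fun x => f x c) (hf_alt : IsAlternating f)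
    (hf_tr : ∀ x, IsTransverse (f x)) (hf_r : IndepOfR f) :
    MaxwellEqs hn (kundtMetric H W hT) (duWedge f) ↔ TransClosed f ∧ TransCoclosed hT f := by
  obtain ⟨q, rfl⟩ := Nat.exists_eq_succ_of_ne_zero (NeZero.ne q)
  let u : Fin n := ⟨0, by omega⟩
  let r : Fin n := ⟨1, by omega⟩
  have hunit : ∀ x, IsUnit (hT x).det := fun x => (hdet x).ne'.isUnit
  have hdensity : raisedDensity (kundtMetric H W hT) (duWedge f) =
      fun x => coordWedge r (raisedDensity hT f x) := funext fun x =>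
    raisedDensity_kundtMetric_duWedge (u := u) rfl rfl (hpad x) (hunit x) (hf_alt x) (hf_tr x)
  have hS_diff := differentiable_raisedDensity hdiff (fun x => (hdet x).ne') hf
  have hS_tr : ∀ x, IsTransverse (raisedDensity hT f x) := fun x v hv =>
    mul_eq_zero_of_right _ (isTransverse_raiseAll (hpad x) (hunit x) (hf_tr x) v hv)
  refine and_congr (extD_duWedge_eq_zero_iff (u := u) (r := r) rfl rfl hf hf_alt hf_tr hf_r) ?_
  rw [extD_hodge_eq_zero_iff hn (isAlternating_duWedge (u := u) rfl hf_alt), hdensity,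
    transCoclosed_iff hdet]
  · exact divergence_coordWedge_eq_zero_iff rfl hS_diff (isAlternating_raisedDensity hT hf_alt)
      hS_tr (indepOfR_raisedDensity hindep hf_r)
  · rw [hdensity]
    exact differentiable_coordWedge r hS_diff

/-- for a VSI `p`-form `F = du ∧ f` (with `p = q+1`) on a degenerate
Kundt background, the source-free Maxwell equations `dF = 0 = d*F` are equivalent to
`f` being closed and co-closed (harmonic) in the transverse Riemannian geometry. -/
theorem maxwell_reduces_to_transverse {n q s : ℕ} [NeZero n] [NeZero q]
    (hn : (q+1) + (s+1) = n)
    (D : DegKundtData n) (hD : D.Regular)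
    (f : TensorField n q) (hf_sm : IsSmoothT f) (hf_alt : IsAlternating f)
    (hf_tr : ∀ (x : Pt n) (v : Fin q → Fin n), (∃ i, (v i : ℕ) < 2) → f x v = 0)
    (hf_r : IndepOfR f) :
    MaxwellEqs hn D.metric (duWedge f) ↔ (TransClosed f ∧ TransCoclosed D.hT f) := by
  obtain ⟨⟨hpad, -, hsmooth, hindep, hpos⟩, -⟩ := hD
  exact maxwell_reduces_to_transverse_general hn D.Hfun D.Wfun hpad
    (fun a b => (hsmooth a b).differentiable (by simp)) hindep (fun x => (hpos x).det_pos)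
    (fun c => (hf_sm c).differentiable (by simp)) hf_alt hf_tr hf_r

end VSI
end
end
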